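/- arXiv:0907.3920 — 12 statements merged into one kernel-verified Lean document; each statement's English description precedes it below -/
import Mathlib

section
/- Let ε > 0 with ε² ≤ 1/3, and let N, M be positive integers with M³ ≥ 32·N/ε⁴. Let p be an ε-nonuniform probability distribution on Fin N such that p i ≤ 1/(2M²) for every i (no big elements). Then, for M independent samples from p, Prob[ p_S ≥ (1 + ε²/2)·M/N ] ≥ 3/4. -/
open scoped Classical

lemma sum_cons_aux {N M : ℕ} (f : (Fin (M+1) → Fin N) → ℝ) :
    ∑ s, f s = ∑ i, ∑ s : Fin M → Fin N, f (Fin.cons i s) := by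
  rw [← Fintype.sum_prod_type' (f := fun i (s : Fin M → Fin N) => f (Fin.cons i s))]
  exact (Fintype.sum_equiv (Fin.consEquiv (fun _ => Fin N)) _ _ (fun x => rfl)).symm

lemma moments_aux {N : ℕ} (p g : Fin N → ℝ) (hsum : ∑ i, p i = 1)
    (hg : ∑ i, p i * g i = 0) (M : ℕ) :
    (∑ s : Fin M → Fin N, ∏ a, p (s a)) = 1 ∧
    (∑ s : Fin M → Fin N, (∏ a, p (s a)) * ∑ a, g (s a)) = 0 ∧
    (∑ s : Fin M → Fin N, (∏ a, p (s a)) * (∑ a, g (s a)) ^ 2) =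
      M * ∑ i, p i * g i ^ 2 := by
  induction M with
  | zero => simp
  | succ M ih =>
    obtain ⟨h1, h2, h3⟩ := ih
    refine ⟨?_, ?_, ?_⟩
    · rw [sum_cons_aux]
      simp only [Fin.prod_univ_succ, Fin.cons_zero, Fin.cons_succ, ← Finset.mul_sum, h1, mul_one,
        hsum]
    · rw [sum_cons_aux]
      simp only [Fin.prod_univ_succ, Fin.sum_univ_succ, Fin.cons_zero, Fin.cons_succ]
      have : ∀ i, ∑ s : Fin M → Fin N, (p i * ∏ a, p (s a)) * (g i + ∑ a, g (s a))
          = p i * g i := by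
        intro i
        calc _ = p i * g i * (∑ s : Fin M → Fin N, ∏ a, p (s a))
              + p i * (∑ s : Fin M → Fin N, (∏ a, p (s a)) * ∑ a, g (s a)) := by
              rw [Finset.mul_sum, Finset.mul_sum, ← Finset.sum_add_distrib]
              exact Finset.sum_congr rfl fun s _ => by ring
          _ = _ := by rw [h1, h2]; ring
      simp only [this, hg]
    · rw [sum_cons_aux]
      simp only [Fin.prod_univ_succ, Fin.sum_univ_succ, Fin.cons_zero, Fin.cons_succ]
      have : ∀ i, ∑ s : Fin M → Fin N, (p i * ∏ a, p (s a)) * (g i + ∑ a, g (s a)) ^ 2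
          = p i * g i ^ 2 + p i * (M * ∑ i, p i * g i ^ 2) := by
        intro i
        calc _ = p i * g i ^ 2 * (∑ s : Fin M → Fin N, ∏ a, p (s a))
              + 2 * p i * g i * (∑ s : Fin M → Fin N, (∏ a, p (s a)) * ∑ a, g (s a))
              + p i * (∑ s : Fin M → Fin N, (∏ a, p (s a)) * (∑ a, g (s a)) ^ 2) := by
              rw [Finset.mul_sum, Finset.mul_sum, Finset.mul_sum, ← Finset.sum_add_distrib,
                ← Finset.sum_add_distrib]
              exact Finset.sum_congr rfl fun s _ => by ring
          _ = _ := by rw [h1, h2, h3]; ring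
      simp only [this, Finset.sum_add_distrib, ← Finset.sum_mul, hsum]
      push_cast; ring

lemma arith_aux (ε M N d : ℝ) (hε : 0 < ε) (hε2 : ε ^ 2 ≤ 1 / 3) (hM' : 0 < M) (hN' : 0 < N)
    (hM3 : M ^ 3 ≥ 32 * N / ε ^ 4) (hcs : ε ^ 2 ≤ d) :
    (1 + d) / (2 * M * N) ≤ (M * d / (2 * N)) ^ 2 * (1 / 4) := by
    have hx : 0 < ε ^ 2 := by positivity
    have hdpos : 0 < d := by linarith
    have h6 : 32 * N ≤ M ^ 3 * (ε ^ 2) ^ 2 := by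
      have := (div_le_iff₀ (by positivity)).mp hM3
      rw [← pow_mul]; exact this
    have h7 : (ε ^ 2) ^ 2 * (1 + d) ≤ 4 * d ^ 2 := by
      have a1 : (ε ^ 2) ^ 2 ≤ d ^ 2 := pow_le_pow_left₀ hx.le hcs 2
      have a2 : (ε ^ 2) ^ 2 * d ≤ d * d :=
        mul_le_mul_of_nonneg_right (by nlinarith) hdpos.le
      nlinarith
    have h8 : 8 * N * (1 + d) ≤ M ^ 3 * d ^ 2 := by
      have b1 := mul_le_mul_of_nonneg_right h6 (by linarith : 0 ≤ 1 + d)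
      have b2 := mul_le_mul_of_nonneg_left h7 (by positivity : (0:ℝ) ≤ M ^ 3)
      nlinarith
    have h9 : (M * d / (2 * N)) ^ 2 * (1 / 4) - (1 + d) / (2 * M * N)
        = (M ^ 3 * d ^ 2 - 8 * N * (1 + d)) / (16 * N ^ 2 * M) := by
      field_simp; ring
    have : 0 ≤ (M ^ 3 * d ^ 2 - 8 * N * (1 + d)) / (16 * N ^ 2 * M) :=
      div_nonneg (by linarith) (by positivity)
    linarith

/-- No-big-elements case: if `p` is ε-nonuniform and `p i ≤ 1/(2M²)` for all `i`,
with `M³ ≥ 32 N / ε⁴`, then `p_S ≥ (1 + ε²/2) M / N` with probability at least `3/4`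
over `M` independent samples from `p`. -/
theorem uniformity_test_no_big_elements
    (ε : ℝ) (hε : 0 < ε) (hε2 : ε ^ 2 ≤ 1 / 3)
    (N M : ℕ) (hN : 0 < N) (hM : 0 < M)
    (hM3 : (M : ℝ) ^ 3 ≥ 32 * (N : ℝ) / ε ^ 4)
    (p : Fin N → ℝ) (hp : ∀ i, 0 ≤ p i) (hsum : ∑ i, p i = 1)
    (hnonunif : ∑ i, |p i - 1 / (N : ℝ)| ≥ ε)
    (hnobig : ∀ i, p i ≤ 1 / (2 * (M : ℝ) ^ 2)) :
    (∑ s ∈ Finset.univ.filter (fun s : Fin M → Fin N =>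
        (1 + ε ^ 2 / 2) * (M : ℝ) / (N : ℝ) ≤ ∑ a, p (s a)),
      ∏ a, p (s a)) ≥ 3 / 4 := by
  have hN' : (0:ℝ) < N := by exact_mod_cast hN
  have hM' : (0:ℝ) < M := by exact_mod_cast hM
  set m : ℝ := ∑ i, p i * p i with hm
  -- lower bound on the collision probability
  have hcs : ε ^ 2 ≤ N * m - 1 := by
    have h1 := sq_sum_le_card_mul_sum_sq (s := Finset.univ) (f := fun i => |p i - 1 / (N:ℝ)|)
    have h2 : ∑ i, |p i - 1 / (N:ℝ)| ^ 2 = m - 1 / N := by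
      have : ∀ i, |p i - 1 / (N:ℝ)| ^ 2 = p i * p i - 2 / N * p i + 1 / N ^ 2 := by
        intro i; rw [sq_abs]; ring
      simp only [this, Finset.sum_add_distrib, Finset.sum_sub_distrib, ← Finset.mul_sum, hsum, ← hm]
      simp only [Finset.sum_const, Finset.card_univ, Fintype.card_fin, nsmul_eq_mul]
      field_simp
      ring
    rw [h2] at h1
    simp only [Finset.card_univ, Fintype.card_fin] at h1
    have h3 : (N:ℝ) * (m - 1 / N) = N * m - 1 := by field_simp
    rw [h3] at h1
    exact le_trans (pow_le_pow_left₀ hε.le hnonunif 2) h1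
  obtain ⟨h1, -, h3⟩ := moments_aux p (fun i => p i - m) hsum (by
    simp only [mul_sub, Finset.sum_sub_distrib, ← Finset.sum_mul, hsum, ← hm]; ring) M
  have hv : ∑ i, p i * (p i - m) ^ 2 ≤ m / (2 * M ^ 2) := by
    have e : ∑ i, p i * (p i - m) ^ 2 = ∑ i, p i * p i * p i - m ^ 2 := by
      have : ∀ i, p i * (p i - m) ^ 2 = p i * p i * p i - 2 * m * (p i * p i) + m ^ 2 * p i := by
        intro i; ring
      simp only [this, Finset.sum_add_distrib, Finset.sum_sub_distrib, ← Finset.mul_sum, hsum, ← hm]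
      ring
    have : ∑ i, p i * p i * p i ≤ m * (1 / (2 * M ^ 2)) := by
      rw [hm, Finset.sum_mul]
      exact Finset.sum_le_sum fun i _ =>
        mul_le_mul_of_nonneg_left (hnobig i) (mul_nonneg (hp i) (hp i))
    rw [e]
    have h4 : m * (1 / (2 * (M:ℝ) ^ 2)) = m / (2 * M ^ 2) := by ring
    nlinarith [sq_nonneg m]
  set v := ∑ i, p i * (p i - m) ^ 2 with hvd
  have hsplit := Finset.sum_filter_add_sum_filter_not Finset.univ (fun s : Fin M → Fin N =>
        (1 + ε ^ 2 / 2) * (M : ℝ) / (N : ℝ) ≤ ∑ a, p (s a)) (fun s => ∏ a, p (s a))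
  rw [h1] at hsplit
  set T : ℝ := (1 + ε ^ 2 / 2) * (M : ℝ) / (N : ℝ) with hT
  set F := ∑ s ∈ Finset.univ.filter (fun s : Fin M → Fin N => ¬ T ≤ ∑ a, p (s a)),
    ∏ a, p (s a) with hF
  set d : ℝ := N * m - 1 with hd
  have hx : 0 < ε ^ 2 := by positivity
  have ht : M * m - T = M * (d - ε ^ 2 / 2) / N := by
    rw [hT, hd]; field_simp; ring
  have htpos : M * d / (2 * N) ≤ M * m - T := by
    rw [ht, div_le_div_iff₀ (by positivity) hN']
    have : 0 ≤ (M:ℝ) * N * (d - ε ^ 2) := by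
      have : 0 ≤ d - ε ^ 2 := by linarith
      positivity
    nlinarith
  have hdpos : 0 < d := by linarith
  have htp : 0 < M * d / (2 * N) := by positivity
  have hcheb : (M * d / (2 * N)) ^ 2 * F ≤ M * v := by
    rw [← h3, hF, Finset.mul_sum]
    refine le_trans (Finset.sum_le_sum (g := fun s : Fin M → Fin N =>
      (∏ a, p (s a)) * (∑ a, (p (s a) - m)) ^ 2) ?_) ?_
    · intro s hs
      have hs' := (Finset.mem_filter.mp hs).2
      push Not at hs'
      rw [mul_comm]
      refine mul_le_mul_of_nonneg_left ?_ (Finset.prod_nonneg fun a _ => hp _)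
      simp only [Finset.sum_sub_distrib, Finset.sum_const, Finset.card_univ, Fintype.card_fin,
        nsmul_eq_mul]
      rw [← neg_sq (_ - _)]
      exact pow_le_pow_left₀ htp.le (by linarith) 2
    · exact Finset.sum_le_sum_of_subset_of_nonneg (Finset.filter_subset _ _) fun s _ _ =>
        mul_nonneg (Finset.prod_nonneg fun a _ => hp _) (sq_nonneg _)
  have hkey : M * v ≤ (M * d / (2 * N)) ^ 2 * (1 / 4) := by
    have hmd : m = (1 + d) / N := by rw [hd]; field_simp; ring
    have h5 : M * v ≤ (1 + d) / (2 * M * N) := by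
      calc M * v ≤ M * (m / (2 * M ^ 2)) := mul_le_mul_of_nonneg_left hv hM'.le
        _ = _ := by rw [hmd]; field_simp
    refine h5.trans ?_
    exact arith_aux ε M N d hε hε2 hM' hN' hM3 hcs
  have hF4 : F ≤ 1 / 4 := le_of_mul_le_mul_left (hcheb.trans hkey) (by positivity)
  linarith
end

section
/- Let p be a probability distribution on Fin N, let M be a positive integer, let Big = {i : p i > 1/(2M²)} and w = ∑_{i ∈ Big} p i, and suppose w < 1. Define p' : Fin N → ℝ by p' i = p i/(1−w) for i ∉ Big and p' i = 0 for i ∈ Big. Then p' is a probability distribution on Fin N, ‖p − p'‖₁ ≤ w + w/(1−w), and if ‖p − u‖₁ ≥ ε (u the uniform distribution), then ‖p' − u‖₁ ≥ ε − w − w/(1−w). -/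
open scoped Classical

/-- Removing big elements: setting the probability of big elements to zero and
renormalizing yields a probability distribution `p'` that is close to `p` in
L1-distance and remains almost as nonuniform as `p`. -/
theorem remove_big_elements
    (N M : ℕ) (hN : 0 < N) (hM : 0 < M)
    (p : Fin N → ℝ) (hp : ∀ i, 0 ≤ p i) (hsum : ∑ i, p i = 1)
    (w : ℝ)
    (hw : w = ∑ i ∈ Finset.univ.filter (fun i => p i > 1 / (2 * (M : ℝ) ^ 2)), p i)
    (hw1 : w < 1)
    (p' : Fin N → ℝ)
    (hp' : ∀ i, p' i = if p i > 1 / (2 * (M : ℝ) ^ 2) then 0 else p i / (1 - w))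
    (ε : ℝ) :
    (∀ i, 0 ≤ p' i) ∧ (∑ i, p' i = 1) ∧
    (∑ i, |p i - p' i| ≤ w + w / (1 - w)) ∧
    ((∑ i, |p i - 1 / (N : ℝ)| ≥ ε) →
      ∑ i, |p' i - 1 / (N : ℝ)| ≥ ε - w - w / (1 - w)) := by
  have h1 : 0 < 1 - w := by linarith
  have hw0 : 0 ≤ w := by
    rw [hw]; exact Finset.sum_nonneg (fun i _ => hp i)
  have hb : ∑ i, (if p i > 1 / (2 * (M : ℝ) ^ 2) then p i else 0) = w := by
    rw [hw, Finset.sum_filter]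
  have hc : 0 ≤ w / (1 - w) := div_nonneg hw0 h1.le
  have key : ∑ i, |p i - p' i| ≤ w + w / (1 - w) := by
    calc ∑ i, |p i - p' i|
        ≤ ∑ i, ((if p i > 1 / (2 * (M : ℝ) ^ 2) then p i else 0) + w / (1 - w) * p i) := by
          refine Finset.sum_le_sum (fun i _ => ?_)
          have hpi := mul_nonneg hc (hp i)
          rw [hp' i]
          split_ifs
          · rw [sub_zero, abs_of_nonneg (hp i)]; linarith
          · have e : p i - p i / (1 - w) = -(w / (1 - w) * p i) := by
              field_simp
              ring
            rw [e, abs_neg, abs_of_nonneg hpi]; linarith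
      _ = w + w / (1 - w) := by
          rw [Finset.sum_add_distrib, hb, ← Finset.mul_sum, hsum, mul_one]
  refine ⟨fun i => ?_, ?_, key, fun h => ?_⟩
  · rw [hp' i]
    split_ifs
    · exact le_rfl
    · exact div_nonneg (hp i) h1.le
  · have e : ∀ i, p' i = (p i - (if p i > 1 / (2 * (M : ℝ) ^ 2) then p i else 0)) / (1 - w) := by
      intro i
      rw [hp' i]
      split_ifs <;> simp
    rw [Finset.sum_congr rfl (fun i _ => e i), ← Finset.sum_div, Finset.sum_sub_distrib, hb, hsum]
    exact div_self h1.ne'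
  · have t : ∑ i, |p i - 1 / (N : ℝ)| ≤ ∑ i, |p i - p' i| + ∑ i, |p' i - 1 / (N : ℝ)| := by
      rw [← Finset.sum_add_distrib]
      exact Finset.sum_le_sum (fun i _ => abs_sub_le _ _ _)
    linarith
end

section
/- Let ε > 0 with ε² ≤ 1/3 and set α = 2⁸/ε⁴. There exists N₀ (depending only on ε) such that the following holds for all N ≥ N₀: for every positive integer M with M³ = 32·N/ε⁴ and every ε-nonuniform probability distribution p on Fin N whose big-element weight satisfies w_big ≤ α/M, one has Prob[ p_S ≥ (1 + ε²/2)·M/N ] ≥ (1/2)·exp(−α), where the probability is over M independent samples from p. -/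
open scoped Classical

/-- Zeroth, first and second moments of a sum of independent centred samples. -/
lemma aux_moments {N : ℕ} (q g : Fin N → ℝ) (hq : ∑ i, q i = 1) (hg : ∑ i, q i * g i = 0)
    (M : ℕ) :
    (∑ s : Fin M → Fin N, ∏ a, q (s a)) = 1 ∧
    (∑ s : Fin M → Fin N, (∏ a, q (s a)) * ∑ a, g (s a)) = 0 ∧
    (∑ s : Fin M → Fin N, (∏ a, q (s a)) * (∑ a, g (s a)) ^ 2)
      = M * ∑ i, q i * g i ^ 2 := by
  induction M with
  | zero => simp
  | succ k ih =>
    obtain ⟨h0, h1, h2⟩ := ih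
    have key : ∀ F : (Fin (k + 1) → Fin N) → ℝ,
        ∑ s, F s = ∑ i : Fin N, ∑ t : Fin k → Fin N, F (Fin.cons i t) := by
      intro F
      rw [← (Fin.consEquiv (fun _ : Fin (k + 1) => Fin N)).sum_comp F, Fintype.sum_prod_type]
      rfl
    refine ⟨?_, ?_, ?_⟩
    · rw [key]
      simp only [Fin.prod_univ_succ, Fin.cons_zero, Fin.cons_succ, ← Finset.mul_sum, h0, mul_one, hq]
    · rw [key]
      simp only [Fin.prod_univ_succ, Fin.sum_univ_succ, Fin.cons_zero, Fin.cons_succ]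
      have : ∀ i : Fin N, ∑ t : Fin k → Fin N,
          (q i * ∏ a, q (t a)) * (g i + ∑ a, g (t a)) = q i * g i := by
        intro i
        have e : ∀ t : Fin k → Fin N, (q i * ∏ a, q (t a)) * (g i + ∑ a, g (t a))
          = (q i * g i) * (∏ a, q (t a)) + q i * ((∏ a, q (t a)) * ∑ a, g (t a)) := by
          intro t; ring
        simp only [e, Finset.sum_add_distrib, ← Finset.mul_sum, h0, h1]
        ring
      simp only [this, hg]
    · rw [key]
      simp only [Fin.prod_univ_succ, Fin.sum_univ_succ, Fin.cons_zero, Fin.cons_succ]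
      have : ∀ i : Fin N, ∑ t : Fin k → Fin N,
          (q i * ∏ a, q (t a)) * (g i + ∑ a, g (t a)) ^ 2
            = q i * g i ^ 2 + q i * (k * ∑ j, q j * g j ^ 2) := by
        intro i
        have e : ∀ t : Fin k → Fin N, (q i * ∏ a, q (t a)) * (g i + ∑ a, g (t a)) ^ 2
          = (q i * g i ^ 2) * (∏ a, q (t a)) + (2 * q i * g i) * ((∏ a, q (t a)) * ∑ a, g (t a))
            + q i * ((∏ a, q (t a)) * (∑ a, g (t a)) ^ 2) := by
          intro t; ring
        simp only [e, Finset.sum_add_distrib, ← Finset.mul_sum, h0, h1, h2]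
        ring
      simp only [this, Finset.sum_add_distrib, ← Finset.sum_mul, hq]
      push_cast
      ring

/-- Chebyshev's inequality for the lower tail. -/
lemma aux_cheb {N : ℕ} (q f : Fin N → ℝ) (hq0 : ∀ i, 0 ≤ q i) (hq : ∑ i, q i = 1)
    (M : ℕ) (T B m : ℝ) (hm : ∑ i, q i * f i = m) (hB : ∑ i, q i * f i ^ 2 ≤ B)
    (hT : T < M * m) (hBT : M * B ≤ 1 / 4 * (M * m - T) ^ 2) :
    3 / 4 ≤ ∑ s ∈ Finset.univ.filter (fun s : Fin M → Fin N => T ≤ ∑ a, f (s a)),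
      ∏ a, q (s a) := by
  have hg : ∑ i, q i * (f i - m) = 0 := by
    simp only [mul_sub, Finset.sum_sub_distrib, ← Finset.sum_mul, hq, hm]; ring
  obtain ⟨h0, -, h2⟩ := aux_moments q (fun i => f i - m) hq hg M
  have hv : ∑ i, q i * (f i - m) ^ 2 ≤ B := by
    have e : ∀ i, q i * (f i - m) ^ 2 = q i * f i ^ 2 - 2 * m * (q i * f i) + m ^ 2 * q i := by
      intro i; ring
    simp only [e, Finset.sum_add_distrib, Finset.sum_sub_distrib, ← Finset.mul_sum, hq, hm]
    nlinarith [sq_nonneg m]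
  have hpos : ∀ s : Fin M → Fin N, 0 ≤ ∏ a, q (s a) := fun s => Finset.prod_nonneg fun a _ => hq0 _
  have hsplit := Finset.sum_filter_add_sum_filter_not Finset.univ
    (fun s : Fin M → Fin N => T ≤ ∑ a, f (s a)) (fun s => ∏ a, q (s a))
  rw [h0] at hsplit
  have hfail : (M * m - T) ^ 2 * ∑ s ∈ Finset.univ.filter
      (fun s : Fin M → Fin N => ¬ T ≤ ∑ a, f (s a)), ∏ a, q (s a) ≤ M * B := by
    calc _ ≤ ∑ s ∈ Finset.univ.filter (fun s : Fin M → Fin N => ¬ T ≤ ∑ a, f (s a)),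
          (∏ a, q (s a)) * (∑ a, (f (s a) - m)) ^ 2 := by
            rw [Finset.mul_sum]
            apply Finset.sum_le_sum
            intro s hs
            have hs' := (Finset.mem_filter.1 hs).2
            push Not at hs'
            rw [mul_comm]
            apply mul_le_mul_of_nonneg_left _ (hpos s)
            simp only [Finset.sum_sub_distrib, Finset.sum_const, Finset.card_univ, Fintype.card_fin,
              nsmul_eq_mul]
            nlinarith
      _ ≤ ∑ s : Fin M → Fin N, (∏ a, q (s a)) * (∑ a, (f (s a) - m)) ^ 2 := by
            apply Finset.sum_le_sum_of_subset_of_nonneg (Finset.filter_subset _ _)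
            intro s _ _
            exact mul_nonneg (hpos s) (sq_nonneg _)
      _ = M * ∑ i, q i * (f i - m) ^ 2 := h2
      _ ≤ M * B := by gcongr
  have hd : 0 < (M * m - T) ^ 2 := by
    have : 0 < M * m - T := by linarith
    positivity
  have : ∑ s ∈ Finset.univ.filter
      (fun s : Fin M → Fin N => ¬ T ≤ ∑ a, f (s a)), ∏ a, q (s a) ≤ 1 / 4 := by
    by_contra h
    have := mul_lt_mul_of_pos_left (not_le.1 h) hd
    linarith
  linarith

/-- Lower bound on the collision probability. -/
lemma aux_l2 {N : ℕ} (hN : 0 < N) (q : Fin N → ℝ) (hq : ∑ i, q i = 1) (δ : ℝ) (hδ : 0 ≤ δ)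
    (h : δ ≤ ∑ i, |q i - 1 / (N : ℝ)|) : 1 + δ ^ 2 ≤ N * ∑ i, q i ^ 2 := by
  have hN' : (0 : ℝ) < N := by exact_mod_cast hN
  have hc := sq_sum_le_card_mul_sum_sq (s := Finset.univ) (f := fun i => |q i - 1 / (N : ℝ)|)
  simp only [sq_abs, Finset.card_univ, Fintype.card_fin] at hc
  have e : ∀ i, (q i - 1 / (N : ℝ)) ^ 2 = q i ^ 2 - 2 / N * q i + 1 / (N : ℝ) ^ 2 := by
    intro i; ring
  simp only [e, Finset.sum_add_distrib, Finset.sum_sub_distrib, ← Finset.mul_sum, hq,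
    Finset.sum_const, Finset.card_univ, Fintype.card_fin, nsmul_eq_mul] at hc
  have e2 : (N : ℝ) * (∑ i, q i ^ 2 - 2 / N * 1 + N * (1 / (N : ℝ) ^ 2))
      = N * ∑ i, q i ^ 2 - 1 := by field_simp; ring
  rw [e2] at hc
  have := pow_le_pow_left₀ hδ h 2
  linarith

set_option maxHeartbeats 2000000 in
/-- A-few-big-elements case: if `p` is ε-nonuniform and its big-element weight
satisfies `w_big ≤ α/M` with `α = 2⁸/ε⁴` and `M³ = 32 N / ε⁴`, then for large
enough `N`, `p_S ≥ (1 + ε²/2) M / N` with probability at least `(1/2)·exp(−α)`. -/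
theorem uniformity_test_few_big_elements
    (ε : ℝ) (hε : 0 < ε) (hε2 : ε ^ 2 ≤ 1 / 3) :
    ∃ N₀ : ℕ, ∀ N : ℕ, N₀ ≤ N → ∀ M : ℕ, 0 < M →
      (M : ℝ) ^ 3 = 32 * (N : ℝ) / ε ^ 4 →
      ∀ p : Fin N → ℝ, (∀ i, 0 ≤ p i) → (∑ i, p i = 1) →
      (∑ i, |p i - 1 / (N : ℝ)| ≥ ε) →
      (∑ i ∈ Finset.univ.filter (fun i => p i > 1 / (2 * (M : ℝ) ^ 2)), p i)
        ≤ (2 ^ 8 / ε ^ 4) / (M : ℝ) →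
      (∑ s ∈ Finset.univ.filter (fun s : Fin M → Fin N =>
          (1 + ε ^ 2 / 2) * (M : ℝ) / (N : ℝ) ≤ ∑ a, p (s a)),
        ∏ a, p (s a)) ≥ (1 / 2) * Real.exp (-(2 ^ 8 / ε ^ 4)) := by
  set α : ℝ := 2 ^ 8 / ε ^ 4 with hα
  have hαpos : 0 < α := by positivity
  have hεle : ε ≤ 1 := by nlinarith
  have hlim := Real.tendsto_one_add_div_pow_exp (-α)
  have hev : ∀ᶠ n : ℕ in Filter.atTop, 3 / 4 * Real.exp (-α) < (1 + (-α) / (n : ℝ)) ^ n :=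
    hlim.eventually_const_lt (by nlinarith [Real.exp_pos (-α)])
  obtain ⟨M₁, hM₁⟩ := Filter.eventually_atTop.1 hev
  obtain ⟨M₂, hM₂⟩ := exists_nat_ge (48 * α / ε ^ 2)
  refine ⟨(max M₁ M₂ + 1) ^ 3, ?_⟩
  intro N hN M hM hMN p hp0 hp1 hpε hw
  have hNpos : 0 < N := lt_of_lt_of_le (by positivity) hN
  have hNr : (0 : ℝ) < N := by exact_mod_cast hNpos
  have hMr : (0 : ℝ) < M := by exact_mod_cast hM
  have hMN' : (M : ℝ) ^ 3 * ε ^ 4 = 32 * N := by rw [hMN]; field_simp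
  have hNM : N ≤ M ^ 3 := by
    have : (N : ℝ) ≤ (M : ℝ) ^ 3 := by
      have h4 : ε ^ 4 ≤ 1 := pow_le_one₀ hε.le hεle
      have h3 : (0 : ℝ) ≤ (M : ℝ) ^ 3 := by positivity
      nlinarith
    exact_mod_cast this
  have hMge : max M₁ M₂ + 1 ≤ M := by
    by_contra h
    push Not at h
    have := Nat.pow_lt_pow_left h (n := 3) (by norm_num)
    omega
  have hMM₁ : M₁ ≤ M := by have := le_max_left M₁ M₂; omega
  have hMM₂ : M₂ ≤ M := by have := le_max_right M₁ M₂; omega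
  have hexp := hM₁ M hMM₁
  have hdM : α / M ≤ ε ^ 2 / 48 := by
    have h1 : 48 * α / ε ^ 2 ≤ M := hM₂.trans (by exact_mod_cast hMM₂)
    rw [div_le_iff₀ (by positivity)] at h1
    rw [div_le_iff₀ hMr]
    linarith
  set w : ℝ := ∑ i ∈ Finset.univ.filter (fun i => p i > 1 / (2 * (M : ℝ) ^ 2)), p i with hwdef
  have hw0 : 0 ≤ w := Finset.sum_nonneg fun i _ => hp0 i
  have hwe : w ≤ ε ^ 2 / 48 := hw.trans hdM
  set q : Fin N → ℝ := fun i => if p i > 1 / (2 * (M : ℝ) ^ 2) then 0 else p i with hqdef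
  have hq0 : ∀ i, 0 ≤ q i := by
    intro i; simp only [hqdef]; split_ifs
    · exact le_rfl
    · exact hp0 i
  have hqp : ∀ i, q i ≤ p i := by
    intro i; simp only [hqdef]; split_ifs
    · exact hp0 i
    · exact le_rfl
  have hqq : ∀ i, q i * p i = q i ^ 2 := by
    intro i; simp only [hqdef]; split_ifs <;> ring
  have hqB : ∀ i, q i * p i ^ 2 ≤ q i * p i * (1 / (2 * (M : ℝ) ^ 2)) := by
    intro i
    by_cases h : p i > 1 / (2 * (M : ℝ) ^ 2)
    · have hz : q i = 0 := if_pos h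
      simp [hz]
    · have h' : p i ≤ 1 / (2 * (M : ℝ) ^ 2) := not_lt.1 h
      have := mul_le_mul_of_nonneg_left h' (mul_nonneg (hq0 i) (hp0 i))
      nlinarith
  have hpq : ∑ i, (p i - q i) = w := by
    rw [hwdef, Finset.sum_filter]
    apply Finset.sum_congr rfl
    intro i _
    simp only [hqdef]; split_ifs <;> ring
  have hqsum : ∑ i, q i = 1 - w := by
    rw [Finset.sum_sub_distrib, hp1] at hpq; linarith
  have hW : 0 < 1 - w := by nlinarith
  set W : ℝ := 1 - w with hWdef
  set r : Fin N → ℝ := fun i => q i / W with hrdef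
  have hr0 : ∀ i, 0 ≤ r i := fun i => div_nonneg (hq0 i) hW.le
  have hrsum : ∑ i, r i = 1 := by
    simp only [hrdef, ← Finset.sum_div, hqsum]; exact div_self hW.ne'
  have hqr : ∀ i, q i = W * r i := by
    intro i; simp only [hrdef]; field_simp
  have hrq : ∀ i, q i ≤ r i := by
    intro i
    have h1 := hqr i
    have h2 := hr0 i
    have h3 : W ≤ 1 := by linarith
    nlinarith
  have hdist : ε - 2 * w ≤ ∑ i, |r i - 1 / (N : ℝ)| := by
    have h1 : ∑ i, |p i - 1 / (N : ℝ)| ≤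
        ∑ i, (|r i - 1 / (N : ℝ)| + (r i - q i) + (p i - q i)) := by
      apply Finset.sum_le_sum
      intro i _
      have h1 := hrq i
      have h2 := hqp i
      have h3 := le_abs_self (r i - 1 / (N : ℝ))
      have h4 := neg_abs_le (r i - 1 / (N : ℝ))
      rw [abs_le]
      constructor <;> linarith
    rw [Finset.sum_add_distrib, Finset.sum_add_distrib, hpq, Finset.sum_sub_distrib, hrsum,
      hqsum] at h1
    linarith
  have hδ : 0 ≤ ε - 2 * w := by nlinarith
  have hl2 := aux_l2 hNpos r hrsum _ hδ hdist
  set m : ℝ := ∑ i, r i * p i with hm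
  have hmW : m = W * ∑ i, r i ^ 2 := by
    rw [hm, Finset.mul_sum]
    apply Finset.sum_congr rfl
    intro i _
    have h1 := hqq i
    rw [hqr i] at h1
    have h2 : W * (r i * p i) = W * (W * r i ^ 2) := by linarith
    exact mul_left_cancel₀ hW.ne' h2
  obtain ⟨x, hx⟩ : ∃ x, x = N * m := ⟨_, rfl⟩
  have hmx : m = x / N := by rw [hx]; field_simp
  have hxlow : 1 + 7 / 8 * ε ^ 2 ≤ x := by
    have h1 : W * (1 + (ε - 2 * w) ^ 2) ≤ x := by
      rw [hx, hmW]
      have := mul_le_mul_of_nonneg_left hl2 hW.le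
      linarith
    refine le_trans ?_ h1
    have h2 : 1 + ε ^ 2 - 4 * w ≤ 1 + (ε - 2 * w) ^ 2 := by
      linarith [mul_le_mul_of_nonneg_right hεle hw0, mul_nonneg hw0 hw0,
        show (ε - 2 * w) ^ 2 = ε ^ 2 - 4 * (ε * w) + 4 * (w * w) by ring]
    have h3 := mul_le_mul_of_nonneg_left h2 hW.le
    refine le_trans ?_ h3
    linarith [mul_le_mul_of_nonneg_left hε2 hw0, mul_nonneg hw0 hw0,
      show W * (1 + ε ^ 2 - 4 * w) = 1 + ε ^ 2 - 5 * w - w * ε ^ 2 + 4 * (w * w) by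
        rw [hWdef]; ring]
  have hsq : ∑ i, r i * p i ^ 2 ≤ m * (1 / (2 * (M : ℝ) ^ 2)) := by
    rw [hm, Finset.sum_mul]
    apply Finset.sum_le_sum
    intro i _
    have h1 := hqB i
    rw [hqr i] at h1
    have h2 : W * (r i * p i ^ 2) ≤ W * (r i * p i * (1 / (2 * (M : ℝ) ^ 2))) := by linarith
    exact le_of_mul_le_mul_left h2 hW
  have hgap : (M : ℝ) * m - (1 + ε ^ 2 / 2) * (M : ℝ) / (N : ℝ) = M / N * (x - 1 - ε ^ 2 / 2) := by
    rw [hmx]; ring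
  have hT : (1 + ε ^ 2 / 2) * (M : ℝ) / (N : ℝ) < M * m := by
    have : 0 < M / N * (x - 1 - ε ^ 2 / 2) := by
      apply mul_pos (by positivity); nlinarith
    linarith
  have hcore : ε ^ 4 * x ≤ 16 * (x - 1 - ε ^ 2 / 2) ^ 2 := by
    obtain ⟨e, he⟩ : ∃ e, e = ε ^ 2 := ⟨_, rfl⟩
    obtain ⟨y, hy⟩ : ∃ y, y = x - 1 - ε ^ 2 / 2 := ⟨_, rfl⟩
    have hxy : x = y + 1 + e / 2 := by rw [hy, he]; ring
    have e4 : ε ^ 4 = e ^ 2 := by rw [he]; ring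
    rw [← hy, e4, hxy]
    have he0 : 0 ≤ e := by rw [he]; positivity
    have he3 : e ≤ 1 / 3 := by rw [he]; exact hε2
    have hy0 : 3 / 8 * e ≤ y := by rw [hy, he]; linarith
    have hyn : 0 ≤ y := by linarith
    have a1 : e ^ 2 ≤ 64 / 9 * y ^ 2 := by nlinarith
    have a2 : e ^ 2 * e ≤ e ^ 2 * (1 / 3) := mul_le_mul_of_nonneg_left he3 (sq_nonneg e)
    have a3 : e * y ≤ 8 / 3 * y ^ 2 := by nlinarith
    have a4 : e * (e * y) ≤ 1 / 3 * (e * y) :=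
      mul_le_mul_of_nonneg_right he3 (mul_nonneg he0 hyn)
    nlinarith [sq_nonneg y]
  have hBT : (M : ℝ) * (m * (1 / (2 * (M : ℝ) ^ 2)))
      ≤ 1 / 4 * (M * m - (1 + ε ^ 2 / 2) * (M : ℝ) / (N : ℝ)) ^ 2 := by
    rw [hgap, hmx]
    have e1 : (M : ℝ) * (x / N * (1 / (2 * (M : ℝ) ^ 2))) = 
        (ε ^ 4 * x) * (M ^ 2 / (64 * N ^ 2)) := by
      have : ε ^ 4 = 32 * N / (M : ℝ) ^ 3 := by field_simp; linarith
      rw [this]; field_simp; ring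
    have e2 : 1 / 4 * ((M : ℝ) / N * (x - 1 - ε ^ 2 / 2)) ^ 2 = 
        (16 * (x - 1 - ε ^ 2 / 2) ^ 2) * (M ^ 2 / (64 * N ^ 2)) := by
      field_simp; ring
    rw [e1, e2]
    exact mul_le_mul_of_nonneg_right hcore (by positivity)
  have hch := aux_cheb r p hr0 hrsum M _ _ m hm.symm hsq hT hBT
  have hWM : 3 / 4 * Real.exp (-α) ≤ W ^ M := by
    refine hexp.le.trans ?_
    apply pow_le_pow_left₀
    · have : ε ^ 2 / 48 ≤ 1 := by linarith
      rw [neg_div]; linarith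
    · rw [neg_div]; linarith
  have hfin : W ^ M * ∑ s ∈ Finset.univ.filter (fun s : Fin M → Fin N =>
          (1 + ε ^ 2 / 2) * (M : ℝ) / (N : ℝ) ≤ ∑ a, p (s a)), ∏ a, r (s a)
      ≤ ∑ s ∈ Finset.univ.filter (fun s : Fin M → Fin N =>
          (1 + ε ^ 2 / 2) * (M : ℝ) / (N : ℝ) ≤ ∑ a, p (s a)), ∏ a, p (s a) := by
    rw [Finset.mul_sum]
    apply Finset.sum_le_sum
    intro s _
    have : W ^ M * ∏ a, r (s a) = ∏ a, q (s a) := by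
      simp only [hqr, Finset.prod_mul_distrib, Finset.prod_const, Finset.card_univ,
        Fintype.card_fin]
    rw [this]
    exact Finset.prod_le_prod (fun a _ => hq0 _) (fun a _ => hqp _)
  have hlast := mul_le_mul hWM hch (by norm_num) (by positivity)
  have := Real.exp_pos (-α)
  refine ge_iff_le.2 (le_trans ?_ (hlast.trans hfin))
  linarith
end

section
/- Let 0 < ε ≤ 2, set α = 2⁸/ε⁴, and let N, M be positive integers with M³ = 32·N/ε⁴. Let p be an ε-nonuniform probability distribution on Fin N whose big-element weight satisfies w_big > α/M. Then, for M independent samples from p, Prob[ p_S ≥ 2M/N ] ≥ 1/2. -/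
open scoped Classical

/-- Many-big-elements case: if `p` is ε-nonuniform with big-element weight
`w_big > α/M` where `α = 2⁸/ε⁴` and `M³ = 32 N / ε⁴`, then `p_S ≥ 2M/N`
with probability at least `1/2` over `M` independent samples from `p`. -/
theorem uniformity_test_many_big_elements
    (ε : ℝ) (hε : 0 < ε) (hε2 : ε ≤ 2)
    (N M : ℕ) (hN : 0 < N) (hM : 0 < M)
    (hM3 : (M : ℝ) ^ 3 = 32 * (N : ℝ) / ε ^ 4)
    (p : Fin N → ℝ) (hp : ∀ i, 0 ≤ p i) (hsum : ∑ i, p i = 1)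
    (hnonunif : ∑ i, |p i - 1 / (N : ℝ)| ≥ ε)
    (hmanybig : (∑ i ∈ Finset.univ.filter (fun i => p i > 1 / (2 * (M : ℝ) ^ 2)), p i)
      > (2 ^ 8 / ε ^ 4) / (M : ℝ)) :
    (∑ s ∈ Finset.univ.filter (fun s : Fin M → Fin N =>
        2 * (M : ℝ) / (N : ℝ) ≤ ∑ a, p (s a)),
      ∏ a, p (s a)) ≥ 1 / 2 := by
  have hMR : (0:ℝ) < M := by exact_mod_cast hM
  have hNR : (0:ℝ) < N := by exact_mod_cast hN
  have he4 : 0 < ε ^ 4 := by positivity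
  have he16 : ε ^ 4 ≤ 16 := by
    calc ε ^ 4 ≤ 2 ^ 4 := by gcongr
      _ = 16 := by norm_num
  obtain ⟨T, hT⟩ : ∃ T : ℝ, T = 128 / ε ^ 4 := ⟨_, rfl⟩
  have hT8 : 8 ≤ T := by
    rw [hT, le_div_iff₀ he4]; linarith
  have hthr : 2 * (M : ℝ) / N = T * (1 / (2 * (M : ℝ) ^ 2)) := by
    have hNe : (N : ℝ) = M ^ 3 * ε ^ 4 / 32 := by
      rw [hM3]; field_simp
    rw [hT, hNe]; field_simp; norm_num
  have hα : (2 ^ 8 / ε ^ 4) / (M : ℝ) = 2 * T / M := by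
    rw [hT]; ring
  rw [hα] at hmanybig
  rw [hthr]
  obtain ⟨c, hc⟩ : ∃ c : ℝ, c = 1 / (2 * (M : ℝ) ^ 2) := ⟨_, rfl⟩
  have hcpos : 0 < c := by rw [hc]; positivity
  rw [← hc] at hmanybig ⊢
  obtain ⟨w, hw⟩ : ∃ w : ℝ, w = ∑ i ∈ Finset.univ.filter (fun i => p i > c), p i := ⟨_, rfl⟩
  rw [← hw] at hmanybig
  have hwM : 2 * T < M * w := by
    have h1 := (div_lt_iff₀ hMR).1 hmanybig
    linarith
  let b : Fin N → ℝ := fun i => if p i > c then 1 else 0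
  have hbw : ∑ i, p i * b i = w := by
    rw [hw, Finset.sum_filter]
    refine Finset.sum_congr rfl fun i _ => ?_
    by_cases h : p i > c <;> simp [b, h]
  have hpb : ∀ i, c * b i ≤ p i := by
    intro i
    by_cases h : p i > c
    · simp only [b, h, if_true]; linarith
    · simp only [b, h, if_false]; linarith [hp i]
  have hexpb : ∀ i, Real.exp (-b i) ≤ 1 - 3 / 5 * b i := by
    intro i
    by_cases h : p i > c
    · simp only [b, h, if_true]
      have h1 := Real.exp_one_gt_d9
      rw [Real.exp_neg]
      have h2 : (Real.exp 1)⁻¹ ≤ (5 / 2 : ℝ)⁻¹ := by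
        apply inv_anti₀ <;> linarith
      norm_num at h2 ⊢
      linarith
    · simp [b, h]
  have htot : ∑ s : Fin M → Fin N, ∏ a, p (s a) = 1 := by
    rw [← Fintype.sum_pow, hsum, one_pow]
  have hE : ∑ i, p i * Real.exp (-b i) ≤ Real.exp (-(3 / 5 * w)) := by
    calc ∑ i, p i * Real.exp (-b i) ≤ ∑ i, (p i - 3 / 5 * (p i * b i)) := by
          refine Finset.sum_le_sum fun i _ => ?_
          have := mul_le_mul_of_nonneg_left (hexpb i) (hp i)
          linarith
      _ = 1 - 3 / 5 * w := by
          rw [Finset.sum_sub_distrib, ← Finset.mul_sum, hsum, hbw]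
      _ ≤ _ := by
          have := Real.add_one_le_exp (-(3 / 5 * w))
          linarith
  have hE0 : 0 ≤ ∑ i, p i * Real.exp (-b i) :=
    Finset.sum_nonneg fun i _ => mul_nonneg (hp i) (Real.exp_pos _).le
  have hbad : ∑ s ∈ Finset.univ.filter (fun s : Fin M → Fin N => ¬ T * c ≤ ∑ a, p (s a)),
      ∏ a, p (s a) ≤ 1 / 2 := by
    calc _ ≤ ∑ s ∈ Finset.univ.filter (fun s : Fin M → Fin N => ¬ T * c ≤ ∑ a, p (s a)),
          Real.exp T * ∏ a, (p (s a) * Real.exp (-b (s a))) := by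
          refine Finset.sum_le_sum fun s hs => ?_
          have hs' := (Finset.mem_filter.1 hs).2
          have h1 : c * ∑ a, b (s a) ≤ ∑ a, p (s a) := by
            rw [Finset.mul_sum]
            exact Finset.sum_le_sum fun a _ => hpb (s a)
          have h2 : ∑ a, b (s a) ≤ T := by
            by_contra h
            have := mul_lt_mul_of_pos_left (not_le.1 h) hcpos
            apply hs'
            linarith
          rw [Finset.prod_mul_distrib, ← Real.exp_sum, Finset.sum_neg_distrib]
          have h3 : 1 ≤ Real.exp T * Real.exp (-∑ a, b (s a)) := by
            rw [← Real.exp_add]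
            apply Real.one_le_exp
            linarith
          have h4 : 0 ≤ ∏ a, p (s a) := Finset.prod_nonneg fun a _ => hp _
          nlinarith [mul_le_mul_of_nonneg_left h3 h4]
      _ ≤ ∑ s : Fin M → Fin N, Real.exp T * ∏ a, (p (s a) * Real.exp (-b (s a))) := by
          refine Finset.sum_le_sum_of_subset_of_nonneg (Finset.filter_subset _ _) fun s _ _ => ?_
          exact mul_nonneg (Real.exp_pos _).le
            (Finset.prod_nonneg fun a _ => mul_nonneg (hp _) (Real.exp_pos _).le)
      _ = Real.exp T * (∑ i, p i * Real.exp (-b i)) ^ M := by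
          rw [← Finset.mul_sum, Fintype.sum_pow]
      _ ≤ Real.exp T * (Real.exp (-(3 / 5 * w))) ^ M := by
          gcongr
      _ = Real.exp (T - 3 / 5 * (M * w)) := by
          rw [← Real.exp_nat_mul, ← Real.exp_add]
          congr 1; ring
      _ ≤ Real.exp (-1) := by
          apply Real.exp_le_exp.2
          linarith
      _ ≤ 1 / 2 := by
          have h1 := Real.exp_one_gt_d9
          rw [Real.exp_neg, one_div]
          apply inv_anti₀ <;> linarith
  have hsplit := Finset.sum_filter_add_sum_filter_not Finset.univ
    (fun s : Fin M → Fin N => T * c ≤ ∑ a, p (s a)) (fun s => ∏ a, p (s a))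
  rw [htot] at hsplit
  have hbad' := hbad
  linarith
end

section
/- Let ε > 0 with ε² ≤ 1/3 and set α = 2⁸/ε⁴. There exists N₀ (depending only on ε) such that for all N ≥ N₀, every positive integer M with M³ = 32·N/ε⁴, and every ε-nonuniform probability distribution p on Fin N: Prob[ p_S ≥ (1 + ε²/2)·M/N ] ≥ (1/2)·exp(−α), where the probability is over M independent samples from p. -/
open scoped Classical

lemma ut_weight_sum {N : ℕ} (p : Fin N → ℝ) (h1 : ∑ i, p i = 1) (M : ℕ) :
    ∑ s : Fin M → Fin N, ∏ a, p (s a) = 1 := by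
  rw [← Fintype.sum_pow, h1, one_pow]

lemma ut_second_moment {N : ℕ} (p g : Fin N → ℝ) (h1 : ∑ i, p i = 1)
    (h0 : ∑ i, p i * g i = 0) (M : ℕ) :
    ∑ s : Fin M → Fin N, (∏ a, p (s a)) * (∑ a, g (s a)) ^ 2
      = M * ∑ i, p i * g i ^ 2 := by
  induction M with
  | zero => simp
  | succ M ih =>
    rw [← (Fin.consEquiv (fun _ : Fin (M + 1) => Fin N)).sum_comp, Fintype.sum_prod_type]
    simp only [Fin.consEquiv, Equiv.coe_fn_mk, Fin.prod_univ_succ, Fin.sum_univ_succ,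
      Fin.cons_zero, Fin.cons_succ]
    have key : ∀ i : Fin N, ∑ s : Fin M → Fin N,
        (p i * ∏ a, p (s a)) * (g i + ∑ a, g (s a)) ^ 2
        = p i * g i ^ 2 + p i * g i * (2 * ∑ s : Fin M → Fin N, (∏ a, p (s a)) * ∑ a, g (s a))
          + p i * (M * ∑ i, p i * g i ^ 2) := by
      intro i
      rw [← ih]
      have hw := ut_weight_sum p h1 M
      calc _ = ∑ s : Fin M → Fin N, (p i * g i ^ 2 * (∏ a, p (s a))
              + p i * g i * 2 * ((∏ a, p (s a)) * ∑ a, g (s a))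
              + p i * ((∏ a, p (s a)) * (∑ a, g (s a)) ^ 2)) := by
            apply Finset.sum_congr rfl; intro s _; ring
        _ = _ := by
            rw [Finset.sum_add_distrib, Finset.sum_add_distrib, ← Finset.mul_sum,
              ← Finset.mul_sum, ← Finset.mul_sum, hw]
            ring
    refine (Finset.sum_congr rfl (fun i _ => key i)).trans ?_
    rw [Finset.sum_add_distrib, Finset.sum_add_distrib, ← Finset.sum_mul, ← Finset.sum_mul,
      h0, h1]
    push_cast
    ring

lemma ut_mean {N : ℕ} (p : Fin N → ℝ) (hN : 0 < N) (h1 : ∑ i, p i = 1)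
    (ε t : ℝ) (hε : 0 < ε) (hε1 : ε ≤ 1) (ht : 4 ≤ N * t)
    (hd : ε ≤ ∑ i, |p i - 1 / (N : ℝ)|) :
    1 + ε ^ 2 ≤ N * ∑ i, p i * min (p i) t := by
  have hNr : (0 : ℝ) < N := by exact_mod_cast hN
  set q : Fin N → ℝ := fun i => min (p i) t with hq
  set η : ℝ := ∑ i, (p i - q i) with hη
  have hη0 : 0 ≤ η := Finset.sum_nonneg fun i _ => sub_nonneg.2 (min_le_left _ _)
  have hsq : ∑ i, q i = 1 - η := by rw [hη, Finset.sum_sub_distrib, h1]; ring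
  have e1 : ∑ i, p i * q i = ∑ i, q i ^ 2 + t * η := by
    rw [hη, Finset.mul_sum, ← Finset.sum_add_distrib]
    apply Finset.sum_congr rfl
    intro i _
    rcases le_total (p i) t with h | h
    · simp only [hq, min_eq_left h]; ring
    · simp only [hq, min_eq_right h]; ring
  have e2 : N * ∑ i, q i ^ 2 = N * ∑ i, |q i - 1 / (N : ℝ)| ^ 2 + 2 * (1 - η) - 1 := by
    have : ∑ i, |q i - 1 / (N : ℝ)| ^ 2
        = ∑ i, q i ^ 2 - 2 / N * ∑ i, q i + N * (1 / (N : ℝ)) ^ 2 := by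
      simp only [sq_abs]
      rw [Finset.mul_sum, ← Finset.sum_sub_distrib]
      have : (N : ℝ) * (1 / (N : ℝ)) ^ 2 = ∑ i : Fin N, (1 / (N : ℝ)) ^ 2 := by simp
      rw [this, ← Finset.sum_add_distrib]
      apply Finset.sum_congr rfl
      intro i _
      ring
    rw [this, hsq]
    field_simp
    ring
  have e3 : (∑ i, |q i - 1 / (N : ℝ)|) ^ 2 ≤ N * ∑ i, |q i - 1 / (N : ℝ)| ^ 2 := by
    have := sq_sum_le_card_mul_sum_sq (s := (Finset.univ : Finset (Fin N)))
      (f := fun i => |q i - 1 / (N : ℝ)|)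
    simpa using this
  have e4 : ε - η ≤ ∑ i, |q i - 1 / (N : ℝ)| := by
    have : ∑ i, |p i - 1 / (N : ℝ)| ≤ η + ∑ i, |q i - 1 / (N : ℝ)| := by
      rw [hη, ← Finset.sum_add_distrib]
      apply Finset.sum_le_sum
      intro i _
      have h : 0 ≤ p i - q i := sub_nonneg.2 (min_le_left _ _)
      calc |p i - 1 / (N : ℝ)| = |(p i - q i) + (q i - 1 / (N : ℝ))| := by ring_nf
        _ ≤ |p i - q i| + |q i - 1 / (N : ℝ)| := abs_add_le _ _
        _ = _ := by rw [abs_of_nonneg h]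
    linarith
  change 1 + ε ^ 2 ≤ N * ∑ i, p i * q i
  rw [e1, mul_add, e2]
  generalize ∑ i, |q i - 1 / (N : ℝ)| = s at *
  nlinarith [sq_nonneg (s - ε), mul_le_mul_of_nonneg_right ht hη0,
    mul_le_mul_of_nonneg_left e4 hε.le, mul_le_mul_of_nonneg_right hε1 hη0]

set_option maxHeartbeats 1000000 in
/-- Main lemma for the Uniformity test: for any ε-nonuniform distribution `p`
on `Fin N` (with `N` large enough and `M³ = 32 N / ε⁴`), the random variable
`p_S` exceeds `(1 + ε²/2) M / N` with probability at least `(1/2)·exp(−α)`,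
where `α = 2⁸/ε⁴`. -/
theorem uniformity_test_main_lemma
    (ε : ℝ) (hε : 0 < ε) (hε2 : ε ^ 2 ≤ 1 / 3) :
    ∃ N₀ : ℕ, ∀ N : ℕ, N₀ ≤ N → ∀ M : ℕ, 0 < M →
      (M : ℝ) ^ 3 = 32 * (N : ℝ) / ε ^ 4 →
      ∀ p : Fin N → ℝ, (∀ i, 0 ≤ p i) → (∑ i, p i = 1) →
      (∑ i, |p i - 1 / (N : ℝ)| ≥ ε) →
      (∑ s ∈ Finset.univ.filter (fun s : Fin M → Fin N =>
          (1 + ε ^ 2 / 2) * (M : ℝ) / (N : ℝ) ≤ ∑ a, p (s a)),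
        ∏ a, p (s a)) ≥ (1 / 2) * Real.exp (-(2 ^ 8 / ε ^ 4)) := by
  refine ⟨⌈8192 / ε ^ 8⌉₊ + 1, ?_⟩
  intro N hN M hM hMN p hp h1 hd
  have hNpos : 0 < N := by omega
  have hNr : (0 : ℝ) < N := by exact_mod_cast hNpos
  have hMr : (0 : ℝ) < M := by exact_mod_cast hM
  have hε1 : ε ≤ 1 := by nlinarith
  have hNbig : 8192 / ε ^ 8 ≤ N :=
    (Nat.le_ceil _).trans (by exact_mod_cast (Nat.le_succ _).trans hN)
  have hMbig : 64 / ε ^ 4 ≤ M := by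
    refine le_of_pow_le_pow_left₀ (n := 3) (by norm_num) hMr.le ?_
    rw [hMN]
    have : (64 / ε ^ 4) ^ 3 = 32 * (8192 / ε ^ 8) / ε ^ 4 := by field_simp; norm_num
    rw [this]
    gcongr
  set t : ℝ := ε ^ 4 / 16 * M / N with ht
  have ht4 : 4 ≤ N * t := by
    have : N * t = ε ^ 4 / 16 * M := by rw [ht]; field_simp
    rw [this]
    rw [div_le_iff₀ (by positivity)] at hMbig
    linarith
  have ht0 : 0 ≤ t := by positivity
  have hmean := ut_mean p hNpos h1 ε t hε hε1 ht4 hd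
  set m : ℝ := ∑ i, p i * min (p i) t with hm
  set g : Fin N → ℝ := fun i => min (p i) t - m with hg
  have hg0 : ∑ i, p i * g i = 0 := by
    simp only [hg, mul_sub, Finset.sum_sub_distrib, ← Finset.sum_mul, h1]
    rw [← hm]; ring
  have hV : ∑ i, p i * g i ^ 2 ≤ t * m := by
    have : ∑ i, p i * g i ^ 2 = ∑ i, p i * min (p i) t ^ 2 - m ^ 2 := by
      have : ∀ i, p i * g i ^ 2
          = p i * min (p i) t ^ 2 - 2 * m * (p i * min (p i) t) + m ^ 2 * p i := by
        intro i; simp only [hg]; ring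
      rw [Finset.sum_congr rfl (fun i _ => this i), Finset.sum_add_distrib,
        Finset.sum_sub_distrib, ← Finset.mul_sum, ← Finset.mul_sum, h1, ← hm]
      ring
    have h2 : ∑ i, p i * min (p i) t ^ 2 ≤ t * m := by
      rw [hm, Finset.mul_sum]
      apply Finset.sum_le_sum
      intro i _
      have hq0 : 0 ≤ min (p i) t := le_min (hp i) ht0
      nlinarith [mul_le_mul_of_nonneg_left (min_le_right (p i) t) (mul_nonneg (hp i) hq0)]
    nlinarith [sq_nonneg m]
  have hmom := ut_second_moment p g h1 hg0 M
  set τ : ℝ := (1 + ε ^ 2 / 2) * (M : ℝ) / (N : ℝ) with hτ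
  have hW := ut_weight_sum p h1 M
  have hW0 : ∀ s : Fin M → Fin N, 0 ≤ ∏ a, p (s a) :=
    fun s => Finset.prod_nonneg fun a _ => hp _
  obtain ⟨v, hv0, hv⟩ : ∃ v : ℝ, 0 ≤ v ∧ m = (1 + ε ^ 2 + v) / N :=
    ⟨N * m - (1 + ε ^ 2), by linarith, by field_simp; ring⟩
  set d : ℝ := M * m - τ with hdd
  have hdv : d = M / N * (ε ^ 2 / 2 + v) := by rw [hdd, hv, hτ]; field_simp; ring
  have hdpos : 0 < d := by rw [hdv]; positivity
  have hvar : M * (t * m) ≤ d ^ 2 / 2 := by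
    have e : M * (t * m) = (M / N) ^ 2 * (ε ^ 4 / 16 * (1 + ε ^ 2 + v)) := by
      rw [ht, hv]; field_simp
    rw [e, hdv, mul_pow, mul_div_assoc]
    apply mul_le_mul_of_nonneg_left _ (by positivity)
    have he : ε ^ 4 = (ε ^ 2) ^ 2 := by ring
    rw [he]
    have hx0 : 0 < ε ^ 2 := by positivity
    generalize ε ^ 2 = x at *
    nlinarith [mul_nonneg hx0.le hv0, mul_nonneg (mul_nonneg hx0.le hv0) (sub_nonneg.2 hε2),
      mul_nonneg (sq_nonneg x) (sub_nonneg.2 hε2), sq_nonneg v, sq_nonneg x]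
  have hsplit := Finset.sum_filter_add_sum_filter_not Finset.univ
    (fun s : Fin M → Fin N => τ ≤ ∑ a, p (s a)) (fun s => ∏ a, p (s a))
  rw [hW] at hsplit
  have hbad : (∑ s ∈ Finset.univ.filter (fun s : Fin M → Fin N => ¬ τ ≤ ∑ a, p (s a)),
      ∏ a, p (s a)) * d ^ 2 ≤ d ^ 2 / 2 := by
    refine le_trans ?_ ((mul_le_mul_of_nonneg_left hV hMr.le).trans hvar)
    rw [← hmom, Finset.sum_mul]
    refine le_trans (Finset.sum_le_sum (fun s hs => ?_))
      (Finset.sum_le_sum_of_subset_of_nonneg (Finset.filter_subset _ _)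
        (fun s _ _ => mul_nonneg (hW0 s) (sq_nonneg _)))
    apply mul_le_mul_of_nonneg_left _ (hW0 s)
    have hs' := (Finset.mem_filter.1 hs).2
    have h3 : ∑ a, g (s a) ≤ -d := by
      have h4 : ∑ a, min (p (s a)) t ≤ ∑ a, p (s a) :=
        Finset.sum_le_sum fun a _ => min_le_left _ _
      have h5 : ∑ a, g (s a) = ∑ a, min (p (s a)) t - M * m := by
        simp [hg, Finset.sum_sub_distrib]
      rw [h5]
      push Not at hs'
      linarith
    rw [← neg_sq (∑ a, g (s a))]
    exact pow_le_pow_left₀ hdpos.le (by linarith) 2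
  have hbad2 : (∑ s ∈ Finset.univ.filter (fun s : Fin M → Fin N => ¬ τ ≤ ∑ a, p (s a)),
      ∏ a, p (s a)) ≤ 1 / 2 := by
    have : 0 < d ^ 2 := by positivity
    refine le_of_mul_le_mul_right (hbad.trans (le_of_eq ?_)) this
    ring
  have hexp : Real.exp (-(2 ^ 8 / ε ^ 4)) ≤ 1 := by
    rw [Real.exp_le_one_iff, neg_nonpos]; positivity
  linarith
end

section
/- Let 0 < ε ≤ 2 and let p, q be probability distributions on Fin N with ‖p − q‖₁ ≤ 2 − ε. Let B = {i : q i < (ε/4)·p i}. Then ∑_{i ∈ B} p i ≤ 1 − ε/4. -/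
open scoped Classical

/-- If `‖p − q‖₁ ≤ 2 − ε`, then the set `B = {i : q i < (ε/4)·p i}` has
`p`-probability at most `1 − ε/4`. -/
theorem small_q_set_bound
    (N : ℕ) (ε : ℝ) (hε : 0 < ε) (hε2 : ε ≤ 2)
    (p q : Fin N → ℝ)
    (hp : ∀ i, 0 ≤ p i) (hpsum : ∑ i, p i = 1)
    (hq : ∀ i, 0 ≤ q i) (hqsum : ∑ i, q i = 1)
    (hdist : ∑ i, |p i - q i| ≤ 2 - ε) :
    ∑ i ∈ Finset.univ.filter (fun i => q i < ε / 4 * p i), p i ≤ 1 - ε / 4 := by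
  have key : ∀ i, (if q i < ε / 4 * p i then p i else 0)
      ≤ (ε / 4 + 1 / 2) * p i - 1 / 2 * q i + 1 / 2 * |p i - q i| := by
    intro i
    have h0 : 0 ≤ ε / 4 * p i := mul_nonneg (by linarith) (hp i)
    have h1 := le_abs_self (p i - q i)
    have h2 := neg_abs_le (p i - q i)
    split_ifs with h <;> linarith
  rw [Finset.sum_filter]
  have hs := Finset.sum_le_sum (fun i (_ : i ∈ Finset.univ) => key i)
  rw [Finset.sum_add_distrib, Finset.sum_sub_distrib, ← Finset.mul_sum, ← Finset.mul_sum,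
    ← Finset.mul_sum, hpsum, hqsum] at hs
  linarith
end

section
/- Let ε > 0, let p be a probability distribution on Fin N, and let B ⊆ Fin N satisfy ∑_{i ∈ B} p i ≤ 1 − ε/4. Let i_1, …, i_M be M independent samples from p and let A ⊆ Fin N be the set of elements appearing at least once among the samples. Then Prob[ |A ∩ B| ≥ (1 − ε/8)·M ] ≤ exp(−M·ε²/32). -/
open scoped Classical

open MeasureTheory ProbabilityTheory in
/-- Hoeffding's lemma for a Bernoulli variable. -/
theorem bernoulli_hoeffding (q t : ℝ) (h0 : 0 ≤ q) (h1 : q ≤ 1) :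
    q * Real.exp t + (1 - q) ≤ Real.exp (t * q + t ^ 2 / 8) := by
  let μ : Measure ℝ := ENNReal.ofReal q • Measure.dirac 1 + ENNReal.ofReal (1 - q) • Measure.dirac 0
  have hμ : IsProbabilityMeasure μ := by
    constructor
    simp only [μ, Measure.add_apply, Measure.smul_apply, measure_univ, smul_eq_mul, mul_one]
    rw [← ENNReal.ofReal_add h0 (by linarith)]
    simp
  have hint : ∀ f : ℝ → ℝ, ∫ x, f x ∂μ = q * f 1 + (1 - q) * f 0 := by
    intro f
    have hi : ∀ (c a : ℝ), Integrable f (ENNReal.ofReal c • Measure.dirac a) := fun c a =>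
      (integrable_dirac (by simp)).smul_measure ENNReal.ofReal_ne_top
    rw [integral_add_measure (hi _ _) (hi _ _)]
    simp [integral_smul_measure, ENNReal.toReal_ofReal, h0, h1]
  have hb : ∀ᵐ ω ∂μ, (fun x : ℝ => x) ω ∈ Set.Icc (0:ℝ) 1 := by
    rw [ae_add_measure_iff]
    constructor
    · apply Measure.ae_smul_measure
      rw [ae_dirac_eq]; simp
    · apply Measure.ae_smul_measure
      rw [ae_dirac_eq]; simp
  have h := (hasSubgaussianMGF_of_mem_Icc (μ := μ) (X := fun x => x) aemeasurable_id hb).mgf_le t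
  simp only [mgf, hint] at h
  have e : Real.exp (t * q + t ^ 2 / 8) = Real.exp (t * q) * Real.exp (t ^ 2 / 8) := Real.exp_add _ _
  have h2 : ((((‖(1:ℝ) - 0‖₊ / 2) ^ 2 : NNReal) : ℝ)) * t ^ 2 / 2 = t ^ 2 / 8 := by
    simp; ring
  rw [h2] at h
  rw [e]
  calc _ = Real.exp (t * q) * (q * Real.exp (t * (1 - (q * 1 + (1 - q) * 0)))
        + (1 - q) * Real.exp (t * (0 - (q * 1 + (1 - q) * 0)))) := by
        have a1 : Real.exp (t * q) * Real.exp (t * (1 - (q * 1 + (1 - q) * 0))) = Real.exp t := by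
          rw [← Real.exp_add]; congr 1; ring
        have a2 : Real.exp (t * q) * Real.exp (t * (0 - (q * 1 + (1 - q) * 0))) = 1 := by
          rw [← Real.exp_add, Real.exp_eq_one_iff]; ring
        linear_combination (-q) * a1 - (1 - q) * a2
    _ ≤ _ := by gcongr

/-- Chernoff-type bound: if `B` has `p`-probability at most `1 − ε/4`, then the
set `A` of elements appearing among `M` independent samples from `p` satisfies
`|A ∩ B| ≥ (1 − ε/8)·M` with probability at most `exp(−Mε²/32)`. -/
theorem intersection_with_B_bound
    (N M : ℕ) (ε : ℝ) (hε : 0 < ε)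
    (p : Fin N → ℝ) (hp : ∀ i, 0 ≤ p i) (hsum : ∑ i, p i = 1)
    (B : Finset (Fin N)) (hB : ∑ i ∈ B, p i ≤ 1 - ε / 4) :
    (∑ s ∈ Finset.univ.filter (fun s : Fin M → Fin N =>
        (1 - ε / 8) * (M : ℝ) ≤ ((Finset.image s Finset.univ ∩ B).card : ℝ)),
      ∏ a, p (s a)) ≤ Real.exp (-(M : ℝ) * ε ^ 2 / 32) := by
  set q := ∑ i ∈ B, p i with hq
  have hq0 : 0 ≤ q := Finset.sum_nonneg fun i _ => hp i
  have hq1 : q ≤ 1 := by linarith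
  let t : ℝ := ε / 2
  let g : Fin N → ℝ := fun i => if i ∈ B then 1 else 0
  have hcard : ∀ s : Fin M → Fin N,
      ((Finset.image s Finset.univ ∩ B).card : ℝ) ≤ ∑ a, g (s a) := by
    intro s
    have h1 : Finset.image s Finset.univ ∩ B
        ⊆ Finset.image s (Finset.univ.filter fun a => s a ∈ B) := by
      intro x hx
      simp only [Finset.mem_inter, Finset.mem_image, Finset.mem_univ, true_and,
        Finset.mem_filter] at hx ⊢
      obtain ⟨⟨a, rfl⟩, hx⟩ := hx
      exact ⟨a, hx, rfl⟩
    have h2 := (Finset.card_le_card h1).trans Finset.card_image_le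
    simp only [g, Finset.sum_boole]
    exact_mod_cast h2
  have hone : ∑ i, p i * Real.exp (t * g i) = q * Real.exp t + (1 - q) := by
    have hg : ∀ i, p i * Real.exp (t * g i)
        = p i + (if i ∈ B then p i * (Real.exp t - 1) else 0) := by
      intro i
      by_cases h : i ∈ B <;> simp [g, h]
      ring
    simp only [hg, Finset.sum_add_distrib, hsum, Finset.sum_ite_mem, Finset.univ_inter,
      ← Finset.sum_mul, ← hq]
    ring
  have hterm : ∀ s : Fin M → Fin N, ∏ a, (p (s a) * Real.exp (t * g (s a)))
      = (∏ a, p (s a)) * Real.exp (t * ∑ a, g (s a)) := by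
    intro s
    rw [Finset.prod_mul_distrib, ← Real.exp_sum, Finset.mul_sum]
  have hprod : ∑ s : Fin M → Fin N, (∏ a, p (s a)) * Real.exp (t * ∑ a, g (s a))
      = (q * Real.exp t + (1 - q)) ^ M := by
    simp only [← hterm]
    rw [← hone, ← Fintype.piFinset_univ,
      ← Finset.prod_univ_sum (fun _ => Finset.univ) (fun _ j => p j * Real.exp (t * g j))]
    simp
  calc _ ≤ ∑ s ∈ Finset.univ.filter (fun s : Fin M → Fin N =>
        (1 - ε / 8) * (M : ℝ) ≤ ((Finset.image s Finset.univ ∩ B).card : ℝ)),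
        Real.exp (-(t * ((1 - ε / 8) * M))) *
          ((∏ a, p (s a)) * Real.exp (t * ∑ a, g (s a))) := by
        apply Finset.sum_le_sum
        intro s hs
        have hs' := (Finset.mem_filter.1 hs).2.trans (hcard s)
        have hP : 0 ≤ ∏ a, p (s a) := Finset.prod_nonneg fun a _ => hp _
        have : 1 ≤ Real.exp (-(t * ((1 - ε / 8) * M))) * Real.exp (t * ∑ a, g (s a)) := by
          rw [← Real.exp_add]
          apply Real.one_le_exp
          have : t * ((1 - ε / 8) * M) ≤ t * ∑ a, g (s a) :=
            mul_le_mul_of_nonneg_left hs' (by positivity)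
          linarith
        nlinarith
    _ ≤ ∑ s : Fin M → Fin N, Real.exp (-(t * ((1 - ε / 8) * M))) *
          ((∏ a, p (s a)) * Real.exp (t * ∑ a, g (s a))) := by
        apply Finset.sum_le_sum_of_subset_of_nonneg (Finset.subset_univ _)
        intro s _ _
        have hP : 0 ≤ ∏ a, p (s a) := Finset.prod_nonneg fun a _ => hp _
        positivity
    _ = Real.exp (-(t * ((1 - ε / 8) * M))) * (q * Real.exp t + (1 - q)) ^ M := by
        rw [← Finset.mul_sum, hprod]
    _ ≤ Real.exp (-(t * ((1 - ε / 8) * M))) * (Real.exp (t * q + t ^ 2 / 8)) ^ M := by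
        have h3 := bernoulli_hoeffding q t hq0 hq1
        have h4 : 0 ≤ q * Real.exp t + (1 - q) :=
          add_nonneg (by positivity) (by linarith)
        gcongr
    _ ≤ _ := by
        rw [← Real.exp_nat_mul, ← Real.exp_add]
        apply Real.exp_le_exp.2
        have h5 : (M : ℝ) * (ε / 2 * q) ≤ M * (ε / 2 * (1 - ε / 4)) := by gcongr
        simp only [t]
        linarith
end

section
/- Let 0 < ε ≤ 2 and let p, q be probability distributions on Fin N with ‖p − q‖₁ ≤ 2 − ε. Let B = {i : q i < (ε/4)·p i} and C = {i : p i ≤ ε/(32N)}, and let M be a positive integer with M ≥ 2⁹/ε². Let i_1, …, i_M be M independent samples from p. Then Prob[ #{a ∈ {1,…,M} : i_a ∈ Bᶜ ∩ Cᶜ} ≥ (ε/16)·M ] ≥ 1/2, where Bᶜ, Cᶜ denote complements in Fin N. -/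
open scoped Classical

theorem good_mass
    (N : ℕ) (ε : ℝ) (hε : 0 < ε)
    (p q : Fin N → ℝ)
    (hp : ∀ i, 0 ≤ p i) (hpsum : ∑ i, p i = 1)
    (hq : ∀ i, 0 ≤ q i) (hqsum : ∑ i, q i = 1)
    (hdist : ∑ i, |p i - q i| ≤ 2 - ε) :
    7 * ε / 32 ≤ ∑ i, (if ¬ (q i < ε / 4 * p i) ∧ ¬ (p i ≤ ε / (32 * (N : ℝ))) then p i else 0) := by
  have hN : (0 : ℝ) < N := by
    rcases Nat.eq_zero_or_pos N with h | h
    · subst h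
      simp at hpsum
    · exact_mod_cast h
  have key : ∀ i, (p i + q i - |p i - q i|) / 2 - ε / 4 * p i - ε / (32 * (N : ℝ)) ≤
      (if ¬ (q i < ε / 4 * p i) ∧ ¬ (p i ≤ ε / (32 * (N : ℝ))) then p i else 0) := by
    intro i
    have h1 := le_abs_self (p i - q i)
    have h2 := neg_abs_le (p i - q i)
    have h3 : 0 ≤ ε / 4 * p i := mul_nonneg (by positivity) (hp i)
    have h4 : 0 < ε / (32 * (N : ℝ)) := by positivity
    split_ifs with h
    · linarith
    · by_cases hb : q i < ε / 4 * p i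
      · linarith
      · have : p i ≤ ε / (32 * (N : ℝ)) := by
          by_contra hc
          exact h ⟨hb, hc⟩
        linarith
  have := Finset.sum_le_sum (fun i (_ : i ∈ Finset.univ) => key i)
  refine le_trans ?_ this
  rw [Finset.sum_sub_distrib, Finset.sum_sub_distrib, ← Finset.sum_div, Finset.sum_sub_distrib,
    Finset.sum_add_distrib, ← Finset.mul_sum, hpsum, hqsum]
  have h5 : ∑ i : Fin N, ε / (32 * (N : ℝ)) = ε / 32 := by
    simp
    field_simp
  rw [h5]
  linarith

/-- If `‖p − q‖₁ ≤ 2 − ε` and `M ≥ 2⁹/ε²`, then with probability at least `1/2`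
at least `(ε/16)·M` of the `M` independent samples from `p` land outside both
`B = {i : q i < (ε/4)·p i}` and `C = {i : p i ≤ ε/(32N)}`. -/
theorem many_good_samples
    (N M : ℕ) (ε : ℝ) (hε : 0 < ε) (hε2 : ε ≤ 2)
    (hM : 0 < M) (hMε : (2 : ℝ) ^ 9 / ε ^ 2 ≤ (M : ℝ))
    (p q : Fin N → ℝ)
    (hp : ∀ i, 0 ≤ p i) (hpsum : ∑ i, p i = 1)
    (hq : ∀ i, 0 ≤ q i) (hqsum : ∑ i, q i = 1)
    (hdist : ∑ i, |p i - q i| ≤ 2 - ε) :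
    (∑ s ∈ Finset.univ.filter (fun s : Fin M → Fin N =>
        ε / 16 * (M : ℝ) ≤
          ((Finset.univ.filter (fun a : Fin M =>
            ¬ (q (s a) < ε / 4 * p (s a)) ∧ ¬ (p (s a) ≤ ε / (32 * (N : ℝ))))).card : ℝ)),
      ∏ a, p (s a)) ≥ 1 / 2 := by
  have hg := good_mass N ε hε p q hp hpsum hq hqsum hdist
  set G : Fin N → Prop := fun i => ¬ (q i < ε / 4 * p i) ∧ ¬ (p i ≤ ε / (32 * (N : ℝ))) with hG
  change 7 * ε / 32 ≤ ∑ i, (if G i then p i else 0) at hg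
  set g := ∑ i, (if G i then p i else 0) with hgdef
  change (∑ s ∈ Finset.univ.filter (fun s : Fin M → Fin N =>
        ε / 16 * (M : ℝ) ≤ ((Finset.univ.filter (fun a : Fin M => G (s a))).card : ℝ)),
      ∏ a, p (s a)) ≥ 1 / 2
  have htot : ∑ s : Fin M → Fin N, ∏ a, p (s a) = 1 := by
    rw [← Fintype.sum_pow, hpsum, one_pow]
  have hsplit := Finset.sum_filter_add_sum_filter_not Finset.univ (fun s : Fin M → Fin N =>
        ε / 16 * (M : ℝ) ≤ ((Finset.univ.filter (fun a : Fin M => G (s a))).card : ℝ))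
        (fun s => ∏ a, p (s a))
  rw [htot] at hsplit
  set h : Fin N → ℝ := fun i => if G i then Real.exp (-1) else 1 with hh
  have hh0 : ∀ i, 0 ≤ h i := by
    intro i
    simp only [hh]
    split_ifs <;> positivity
  have hprod : ∀ s : Fin M → Fin N, ∏ a, h (s a) =
      Real.exp (-((Finset.univ.filter (fun a : Fin M => G (s a))).card : ℝ)) := by
    intro s
    simp only [hh]
    rw [Finset.prod_ite, Finset.prod_const, Finset.prod_const_one, mul_one, ← Real.exp_nat_mul]
    congr 1
    ring
  have hbad : ∑ s ∈ Finset.univ.filter (fun s : Fin M → Fin N =>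
        ¬ ε / 16 * (M : ℝ) ≤ ((Finset.univ.filter (fun a : Fin M => G (s a))).card : ℝ)),
      ∏ a, p (s a) ≤ Real.exp (ε / 16 * M) * (∑ i, p i * h i) ^ M := by
    rw [Fintype.sum_pow, Finset.mul_sum]
    refine le_trans (Finset.sum_le_sum (g := fun s : Fin M → Fin N =>
      Real.exp (ε / 16 * M) * ∏ a, (p (s a) * h (s a))) ?_)
      (Finset.sum_le_sum_of_subset_of_nonneg (Finset.filter_subset _ _) ?_)
    · intro s hs
      have hs' := not_le.mp (Finset.mem_filter.mp hs).2
      have h0 : 0 ≤ ∏ a, p (s a) := Finset.prod_nonneg (fun a _ => hp _)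
      rw [Finset.prod_mul_distrib, hprod, mul_left_comm, ← Real.exp_add]
      apply le_mul_of_one_le_right h0
      apply Real.one_le_exp
      linarith
    · intro s _ _
      exact mul_nonneg (Real.exp_pos _).le
        (Finset.prod_nonneg (fun a _ => mul_nonneg (hp _) (hh0 _)))
  have hmean : ∑ i, p i * h i = 1 - g * (1 - Real.exp (-1)) := by
    have h1 : ∑ i, p i * h i = ∑ i, p i - g * (1 - Real.exp (-1)) := by
      rw [hgdef, Finset.sum_mul, ← Finset.sum_sub_distrib]
      apply Finset.sum_congr rfl
      intro i _
      simp only [hh]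
      split_ifs <;> ring
    rw [h1, hpsum]
  have he : Real.exp (-1) ≤ 2 / 5 := by
    have := Real.exp_neg_one_lt_d9
    linarith
  have hmean0 : 0 ≤ ∑ i, p i * h i :=
    Finset.sum_nonneg (fun i _ => mul_nonneg (hp _) (hh0 _))
  have hle : ∑ i, p i * h i ≤ Real.exp (-(21 * ε / 160)) := by
    have h1 := Real.add_one_le_exp (-(21 * ε / 160))
    rw [hmean]
    nlinarith
  have hpow : (∑ i, p i * h i) ^ M ≤ Real.exp (M * (-(21 * ε / 160))) := by
    rw [Real.exp_nat_mul]
    exact pow_le_pow_left₀ hmean0 hle M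
  have hMe : 256 ≤ (M : ℝ) * ε := by
    rw [div_le_iff₀ (by positivity)] at hMε
    nlinarith
  have hfin : Real.exp (ε / 16 * M) * (∑ i, p i * h i) ^ M ≤ 2 / 5 := by
    calc _ ≤ Real.exp (ε / 16 * M) * Real.exp (M * (-(21 * ε / 160))) :=
          mul_le_mul_of_nonneg_left hpow (Real.exp_pos _).le
      _ = Real.exp (ε / 16 * M + M * (-(21 * ε / 160))) := (Real.exp_add _ _).symm
      _ ≤ Real.exp (-1) := by
          apply Real.exp_le_exp.mpr
          nlinarith
      _ ≤ 2 / 5 := he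
  linarith
end

section
/- Let 0 < ε ≤ 2 and let N, M be positive integers with 2⁹/ε² ≤ M ≤ N. Let p, q be probability distributions on Fin N with ‖p − q‖₁ ≤ 2 − ε. Let i_1, …, i_M be M independent samples from p, let A ⊆ Fin N be the set of elements appearing at least once among the samples, and let q_A = ∑_{i ∈ A} q i. Then Prob[ q_A ≥ ε³·M/(2¹¹·N) ] ≥ 1/2. -/
open scoped Classical

namespace CollAux

/-- Indicator that `x ≠ i`. -/
noncomputable def u {N : ℕ} (i x : Fin N) : ℝ := if x = i then 0 else 1

/-- Indicator that `i` is not sampled. -/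
noncomputable def I {N M : ℕ} (i : Fin N) (s : Fin M → Fin N) : ℝ := ∏ a, u i (s a)

lemma I_val {N M : ℕ} (i : Fin N) (s : Fin M → Fin N) :
    I i s = if i ∈ Finset.image s Finset.univ then 0 else 1 := by
  unfold I u
  split_ifs with h
  · obtain ⟨a, _, ha⟩ := Finset.mem_image.1 h
    exact Finset.prod_eq_zero (Finset.mem_univ a) (by simp [ha])
  · apply Finset.prod_eq_one
    intro a _
    rw [if_neg]
    intro ha
    exact h (Finset.mem_image.2 ⟨a, Finset.mem_univ a, ha⟩)

lemma sum_p {N M : ℕ} (p : Fin N → ℝ) (hpsum : ∑ i, p i = 1) :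
    ∑ s : Fin M → Fin N, ∏ a, p (s a) = 1 := by
  rw [← Fintype.sum_pow, hpsum, one_pow]

lemma sum_pu {N : ℕ} (p : Fin N → ℝ) (hpsum : ∑ i, p i = 1) (i : Fin N) :
    ∑ x, p x * u i x = 1 - p i := by
  have : ∀ x, p x * u i x = p x - if x = i then p x else 0 := by
    intro x; unfold u; split_ifs <;> ring
  simp [this, hpsum]

lemma E_I {N M : ℕ} (p : Fin N → ℝ) (hpsum : ∑ i, p i = 1) (i : Fin N) :
    ∑ s : Fin M → Fin N, (∏ a, p (s a)) * I i s = (1 - p i) ^ M := by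
  rw [← sum_pu p hpsum i, Fintype.sum_pow]
  simp only [I, Finset.prod_mul_distrib]

lemma E_II {N M : ℕ} (p : Fin N → ℝ) (hp : ∀ i, 0 ≤ p i) (hpsum : ∑ i, p i = 1)
    (i j : Fin N) (hij : i ≠ j) :
    ∑ s : Fin M → Fin N, (∏ a, p (s a)) * (I i s * I j s) ≤ (1 - p i) ^ M * (1 - p j) ^ M := by
  have h1 : ∑ s : Fin M → Fin N, (∏ a, p (s a)) * (I i s * I j s)
      = (∑ x, p x * (u i x * u j x)) ^ M := by
    rw [Fintype.sum_pow]
    simp only [I, Finset.prod_mul_distrib]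
  have h2 : ∑ x, p x * (u i x * u j x) = 1 - p i - p j := by
    have : ∀ x, p x * (u i x * u j x)
        = p x - (if x = i then p x else 0) - (if x = j then p x else 0) := by
      intro x; unfold u
      by_cases hi : x = i
      · have : x ≠ j := fun h => hij (hi.symm.trans h)
        simp [hi, hij]
      · simp [hi]; split_ifs <;> ring
    simp [this, hpsum]
  have h3 : 0 ≤ ∑ x, p x * (u i x * u j x) := by
    apply Finset.sum_nonneg
    intro x _
    apply mul_nonneg (hp x)
    unfold u; split_ifs <;> simp
  rw [h1, ← mul_pow]
  apply pow_le_pow_left₀ h3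
  rw [h2]
  nlinarith [mul_nonneg (hp i) (hp j)]

lemma cov {N M : ℕ} (p : Fin N → ℝ) (hp : ∀ i, 0 ≤ p i) (hpsum : ∑ i, p i = 1)
    (i j : Fin N) :
    ∑ s : Fin M → Fin N, (∏ a, p (s a)) * ((I i s - (1 - p i) ^ M) * (I j s - (1 - p j) ^ M))
      ≤ if i = j then 1 - (1 - p i) ^ M else 0 := by
  have e : ∑ s : Fin M → Fin N,
        (∏ a, p (s a)) * ((I i s - (1 - p i) ^ M) * (I j s - (1 - p j) ^ M))
      = ∑ s : Fin M → Fin N, (∏ a, p (s a)) * (I i s * I j s) - (1 - p i) ^ M * (1 - p j) ^ M := by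
    have : ∀ s : Fin M → Fin N,
        (∏ a, p (s a)) * ((I i s - (1 - p i) ^ M) * (I j s - (1 - p j) ^ M))
        = (∏ a, p (s a)) * (I i s * I j s) - (1 - p j) ^ M * ((∏ a, p (s a)) * I i s)
          - (1 - p i) ^ M * ((∏ a, p (s a)) * I j s)
          + (1 - p i) ^ M * (1 - p j) ^ M * (∏ a, p (s a)) := by
      intro s; ring
    simp only [this, Finset.sum_add_distrib, Finset.sum_sub_distrib, ← Finset.mul_sum,
      E_I p hpsum, sum_p p hpsum]
    ring
  rw [e]
  split_ifs with h
  · subst h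
    have : ∀ s : Fin M → Fin N, I i s * I i s = I i s := by
      intro s; rw [I_val]; split_ifs <;> simp
    simp only [this, E_I p hpsum]
    nlinarith [sq_nonneg (1 - (1 - p i) ^ M)]
  · linarith [E_II (M := M) p hp hpsum i j h]

lemma variance {N M : ℕ} (p : Fin N → ℝ) (hp : ∀ i, 0 ≤ p i) (hpsum : ∑ i, p i = 1)
    (w : Fin N → ℝ) (hw : ∀ i, 0 ≤ w i) :
    ∑ s : Fin M → Fin N, (∏ a, p (s a)) * (∑ i, w i * (I i s - (1 - p i) ^ M)) ^ 2
      ≤ ∑ i, w i * w i * (1 - (1 - p i) ^ M) := by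
  have e : ∑ s : Fin M → Fin N, (∏ a, p (s a)) * (∑ i, w i * (I i s - (1 - p i) ^ M)) ^ 2
      = ∑ i, ∑ j, w i * w j * ∑ s : Fin M → Fin N,
        (∏ a, p (s a)) * ((I i s - (1 - p i) ^ M) * (I j s - (1 - p j) ^ M)) := by
    simp only [sq, Finset.sum_mul_sum]
    simp only [Finset.mul_sum]
    rw [Finset.sum_comm]
    apply Finset.sum_congr rfl; intro i _
    rw [Finset.sum_comm]
    apply Finset.sum_congr rfl; intro j _
    apply Finset.sum_congr rfl; intro s _
    ring
  rw [e]
  apply Finset.sum_le_sum; intro i _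
  calc _ ≤ ∑ j, w i * w j * (if i = j then 1 - (1 - p i) ^ M else 0) := by
        apply Finset.sum_le_sum; intro j _
        exact mul_le_mul_of_nonneg_left (cov p hp hpsum i j) (mul_nonneg (hw i) (hw j))
    _ = _ := by simp

lemma hit {M : ℕ} (x : ℝ) (h0 : 0 ≤ x) (h1 : x ≤ 1) :
    (1 - x) ^ M * (1 + M * x) ≤ 1 := by
  have hb : 1 + M * x ≤ (1 + x) ^ M := one_add_mul_le_pow (by linarith) M
  calc (1 - x) ^ M * (1 + M * x) ≤ (1 - x) ^ M * (1 + x) ^ M :=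
        mul_le_mul_of_nonneg_left hb (pow_nonneg (by linarith) M)
    _ = (1 - x ^ 2) ^ M := by rw [← mul_pow]; ring
    _ ≤ 1 := pow_le_one₀ (by nlinarith) (by nlinarith)

/-- `1 - (1-x)^M ≥ c/2` for `c ≤ min(1, M x)`. -/
lemma hit2 {M : ℕ} (x c : ℝ) (h0 : 0 ≤ x) (h1 : x ≤ 1) (hc : c ≤ 1) (hcM : c ≤ M * x) :
    c / 2 ≤ 1 - (1 - x) ^ M := by
  have h := hit (M := M) x h0 h1
  have hy : 0 ≤ (1 - x) ^ M := pow_nonneg (by linarith) M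
  have hy1 : (1 - x) ^ M ≤ 1 := pow_le_one₀ (by linarith) (by linarith)
  by_cases hc0 : c ≤ 0
  · linarith
  push Not at hc0
  have : (1 - x) ^ M * (1 + c) ≤ 1 := by nlinarith
  by_contra hcon
  push Not at hcon
  nlinarith

lemma bad_good {N M : ℕ} (p : Fin N → ℝ) (hpsum : ∑ i, p i = 1)
    (P : (Fin M → Fin N) → Prop)
    (h : ∑ s ∈ Finset.univ.filter (fun s => ¬ P s), ∏ a, p (s a) ≤ 1 / 2) :
    (∑ s ∈ Finset.univ.filter (fun s => P s), ∏ a, p (s a)) ≥ 1 / 2 := by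
  have := Finset.sum_filter_add_sum_filter_not Finset.univ P (fun s : Fin M → Fin N => ∏ a, p (s a))
  rw [sum_p p hpsum] at this
  linarith

end CollAux

open CollAux

/-- Collision-probability lemma for testing Orthogonality: if `‖p − q‖₁ ≤ 2 − ε`
and `2⁹/ε² ≤ M ≤ N`, then the set `A` of elements appearing among `M` independent
samples from `p` satisfies `q_A ≥ ε³M/(2¹¹N)` with probability at least `1/2`. -/
theorem collision_probability_lower_bound
    (N M : ℕ) (ε : ℝ) (hε : 0 < ε) (hε2 : ε ≤ 2)
    (hN : 0 < N) (hM : 0 < M) (hMN : M ≤ N)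
    (hMε : (2 : ℝ) ^ 9 / ε ^ 2 ≤ (M : ℝ))
    (p q : Fin N → ℝ)
    (hp : ∀ i, 0 ≤ p i) (hpsum : ∑ i, p i = 1)
    (hq : ∀ i, 0 ≤ q i) (hqsum : ∑ i, q i = 1)
    (hdist : ∑ i, |p i - q i| ≤ 2 - ε) :
    (∑ s ∈ Finset.univ.filter (fun s : Fin M → Fin N =>
        ε ^ 3 * (M : ℝ) / (2 ^ 11 * (N : ℝ)) ≤ ∑ i ∈ Finset.image s Finset.univ, q i),
      ∏ a, p (s a)) ≥ 1 / 2 := by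
  have hNr : (0:ℝ) < N := by exact_mod_cast hN
  have hMr : (0:ℝ) < M := by exact_mod_cast hM
  have hMNr : (M:ℝ) ≤ N := by exact_mod_cast hMN
  have hp1 : ∀ i, p i ≤ 1 := fun i => by
    rw [← hpsum]; exact Finset.single_le_sum (fun j _ => hp j) (Finset.mem_univ i)
  have hP0 : ∀ s : Fin M → Fin N, 0 ≤ ∏ a, p (s a) := fun s =>
    Finset.prod_nonneg (fun a _ => hp _)
  set t : ℝ := ε ^ 3 * (M : ℝ) / (2 ^ 11 * (N : ℝ)) with ht
  have ht0 : 0 < t := by positivity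
  have hMε' : (2:ℝ) ^ 9 ≤ M * ε ^ 2 := by
    rwa [div_le_iff₀ (by positivity)] at hMε
  have htg : ε / (4 * N) ≤ t := by
    rw [ht, div_le_div_iff₀ (by positivity) (by positivity)]
    have := mul_le_mul_of_nonneg_left hMε' (by positivity : 0 ≤ ε * N * 4)
    nlinarith
  set r : Fin N → ℝ := fun i => min (p i) (q i) with hr
  have hr0 : ∀ i, 0 ≤ r i := fun i => le_min (hp i) (hq i)
  have hrp : ∀ i, r i ≤ p i := fun i => min_le_left _ _
  have hrq : ∀ i, r i ≤ q i := fun i => min_le_right _ _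
  have hrsum : ε / 2 ≤ ∑ i, r i := by
    have : ∀ i, r i = (p i + q i - |p i - q i|) / 2 := by
      intro i
      simp only [hr]
      rcases le_total (p i) (q i) with h | h
      · rw [min_eq_left h, abs_of_nonpos (by linarith)]; ring
      · rw [min_eq_right h, abs_of_nonneg (by linarith)]; ring
    simp only [this]
    rw [← Finset.sum_div, Finset.sum_sub_distrib, Finset.sum_add_distrib]
    linarith
  by_cases hbig : ∃ i, t ≤ r i ∧ 1 ≤ M * r i
  · obtain ⟨i, hti, hMi⟩ := hbig
    apply bad_good p hpsum
    have h1 : (1 - p i) ^ M ≤ 1 / 2 := by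
      have := hit2 (M := M) (p i) 1 (hp i) (hp1 i) le_rfl
        (hMi.trans (mul_le_mul_of_nonneg_left (hrp i) hMr.le))
      linarith
    refine le_trans ?_ h1
    rw [← E_I p hpsum, Finset.sum_filter]
    apply Finset.sum_le_sum
    intro s _
    rw [I_val]
    by_cases hs : i ∈ Finset.image s Finset.univ
    · rw [if_neg, if_pos hs, mul_zero]
      rw [not_not]
      exact (hti.trans (hrq i)).trans (Finset.single_le_sum (fun j _ => hq j) hs)
    · rw [if_neg hs, mul_one]
      split_ifs
      · exact hP0 s
      · exact le_rfl
  · push Not at hbig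
    set w : Fin N → ℝ := fun i => min (r i) t with hw
    have hw0 : ∀ i, 0 ≤ w i := fun i => le_min (hr0 i) ht0.le
    have hwt : ∀ i, w i ≤ t := fun i => min_le_right _ _
    have hwr : ∀ i, w i ≤ r i := fun i => min_le_left _ _
    set μ : ℝ := ∑ i, w i * (1 - (1 - p i) ^ M) with hμ
    have hc0 : ∀ i, 0 ≤ 1 - (1 - p i) ^ M := fun i => by
      have := pow_le_one₀ (n := M) (by linarith [hp1 i] : 0 ≤ 1 - p i) (by linarith [hp i])
      linarith
    -- lower bound on each term
    have hδ1 : ε * M / (4 * N) ≤ 1 := by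
      rw [div_le_one (by positivity)]; nlinarith
    have hterm : ∀ i, (r i - ε / (4 * N)) * (ε * M / (4 * N) / 2)
        ≤ w i * (1 - (1 - p i) ^ M) := by
      intro i
      by_cases hg : r i ≤ ε / (4 * N)
      · refine le_trans ?_ (mul_nonneg (hw0 i) (hc0 i))
        exact mul_nonpos_of_nonpos_of_nonneg (by linarith) (by positivity)
      push Not at hg
      have hpos : 0 ≤ ε * M / (4 * N) / 2 := by positivity
      have hpe : 0 ≤ ε / (4 * N) := by positivity
      have hle : (r i - ε / (4 * N)) * (ε * M / (4 * N) / 2) ≤ r i * (ε * M / (4 * N) / 2) :=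
        mul_le_mul_of_nonneg_right (by linarith) hpos
      refine hle.trans ?_
      have hMp : M * r i ≤ M * p i := mul_le_mul_of_nonneg_left (hrp i) hMr.le
      rcases le_or_gt t (r i) with h | h
      · have h1 := hbig i h
        have h2 := hit2 (M := M) (p i) (M * r i) (hp i) (hp1 i) h1.le hMp
        have hwi : w i = t := min_eq_right h
        rw [hwi]
        calc r i * (ε * M / (4 * N) / 2) = ε / (4 * N) * (M * r i / 2) := by ring
          _ ≤ t * (M * r i / 2) :=
            mul_le_mul_of_nonneg_right htg (by have := hr0 i; positivity)
          _ ≤ _ := mul_le_mul_of_nonneg_left h2 ht0.le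
      · have hwi : w i = r i := min_eq_left h.le
        rw [hwi]
        apply mul_le_mul_of_nonneg_left _ (hr0 i)
        apply hit2 (p i) _ (hp i) (hp1 i) hδ1
        refine le_trans ?_ hMp
        calc ε * M / (4 * N) = M * (ε / (4 * N)) := by ring
          _ ≤ _ := mul_le_mul_of_nonneg_left hg.le hMr.le
    have hμlow : 32 * t ≤ μ := by
      have h1 : ∑ i, (r i - ε / (4 * N)) * (ε * M / (4 * N) / 2) ≤ μ :=
        Finset.sum_le_sum (fun i _ => hterm i)
      rw [← Finset.sum_mul, Finset.sum_sub_distrib] at h1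
      simp only [Finset.sum_const, Finset.card_univ, Fintype.card_fin, nsmul_eq_mul] at h1
      have h2 : (N:ℝ) * (ε / (4 * N)) = ε / 4 := by field_simp
      rw [h2] at h1
      refine le_trans ?_ h1
      have h3 : ε / 4 * (ε * M / (4 * N) / 2) ≤ (∑ i, r i - ε / 4) * (ε * M / (4 * N) / 2) :=
        mul_le_mul_of_nonneg_right (by linarith) (by positivity)
      refine le_trans ?_ h3
      have h4 : 32 * t = (ε / 2) * (ε / 4 * (ε * M / (4 * N) / 2)) := by
        rw [ht]; field_simp; norm_num
      rw [h4]
      have : 0 ≤ ε / 4 * (ε * M / (4 * N) / 2) := by positivity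
      nlinarith
    have hvar : ∑ s : Fin M → Fin N, (∏ a, p (s a)) * (∑ i, w i * (I i s - (1 - p i) ^ M)) ^ 2
        ≤ t * μ := by
      refine (variance p hp hpsum w hw0).trans ?_
      rw [hμ, Finset.mul_sum]
      apply Finset.sum_le_sum; intro i _
      rw [mul_assoc]
      exact mul_le_mul_of_nonneg_right (hwt i) (mul_nonneg (hw0 i) (hc0 i))
    apply bad_good p hpsum
    have hcheb : (∑ s ∈ Finset.univ.filter (fun s : Fin M → Fin N =>
        ¬ t ≤ ∑ i ∈ Finset.image s Finset.univ, q i), ∏ a, p (s a)) * (μ - t) ^ 2 ≤ t * μ := by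
      refine le_trans ?_ hvar
      rw [Finset.sum_mul, Finset.sum_filter]
      apply Finset.sum_le_sum
      intro s _
      split_ifs with hs
      · exact mul_nonneg (hP0 s) (sq_nonneg _)
      · apply mul_le_mul_of_nonneg_left _ (hP0 s)
        have hY : ∑ i, w i * (1 - I i s) ≤ ∑ i ∈ Finset.image s Finset.univ, q i := by
          have e : ∑ i ∈ Finset.image s Finset.univ, q i
              = ∑ i, if i ∈ Finset.image s Finset.univ then q i else 0 := by
            rw [Finset.sum_ite_mem, Finset.univ_inter]
          rw [e]
          apply Finset.sum_le_sum; intro i _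
          rw [I_val]
          split_ifs
          · linarith [hwr i, hrq i]
          · simp
        have hd : ∑ i, w i * (I i s - (1 - p i) ^ M) = μ - ∑ i, w i * (1 - I i s) := by
          rw [hμ, ← Finset.sum_sub_distrib]
          apply Finset.sum_congr rfl; intro i _; ring
        rw [hd]
        push Not at hs
        apply pow_le_pow_left₀ <;> linarith
    set B := ∑ s ∈ Finset.univ.filter (fun s : Fin M → Fin N =>
        ¬ t ≤ ∑ i ∈ Finset.image s Finset.univ, q i), ∏ a, p (s a)
    by_contra hB
    push Not at hB
    nlinarith [mul_lt_mul_of_pos_right hB (by nlinarith : 0 < (μ - t) ^ 2)]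
end

section
/- Let N be an even positive integer, let H : Fin N → Fin (3N/2) be a two-to-one function, and let σ be any permutation of Fin N. Define probability distributions p, q on Fin (3N/2) by p w = (2/N)·|{u ∈ Fin N : u is odd and H(σ u) = w}| and q w = (2/N)·|{u ∈ Fin N : u is even and H(σ u) = w}|. Let ℳ_σ be the set of unordered pairs {u,v} of distinct elements of Fin N with H(σ u) = H(σ v) (ℳ_σ is a perfect matching of Fin N since H is two-to-one). Then ‖p − q‖₁ = 2 − (4/N)·#{ {u,v} ∈ ℳ_σ : u and v have different parity }. -/
open scoped Classical

/-- For a two-to-one function `H : Fin N → Fin (3N/2)` and a permutation `σ` of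
`Fin N`, the L1-distance between the distributions `p` and `q` (obtained by
pushing the uniform distributions on odd resp. even labels through `H ∘ σ`)
equals `2 − (4/N)` times the number of matched pairs of different parity. -/
theorem distance_via_matching_parity
    (N : ℕ) (hN : 0 < N) (hN2 : N % 2 = 0)
    (H : Fin N → Fin (3 * (N / 2)))
    (hH : ∀ w, (∃ u, H u = w) → (Finset.univ.filter (fun u => H u = w)).card = 2)
    (σ : Equiv.Perm (Fin N))
    (p q : Fin (3 * (N / 2)) → ℝ)
    (hp : ∀ w, p w = (2 / (N : ℝ)) *
      ((Finset.univ.filter (fun u : Fin N => Odd (u : ℕ) ∧ H (σ u) = w)).card : ℝ))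
    (hq : ∀ w, q w = (2 / (N : ℝ)) *
      ((Finset.univ.filter (fun u : Fin N => Even (u : ℕ) ∧ H (σ u) = w)).card : ℝ)) :
    ∑ w, |p w - q w| = 2 - (4 / (N : ℝ)) *
      ((Finset.univ.filter (fun uv : Fin N × Fin N =>
        (uv.1 : ℕ) < (uv.2 : ℕ) ∧ H (σ uv.1) = H (σ uv.2) ∧
          ¬ (Odd (uv.1 : ℕ) ↔ Odd (uv.2 : ℕ)))).card : ℝ) := by
  have hN' : (N : ℝ) ≠ 0 := by exact_mod_cast hN.ne'
  set a : Fin (3 * (N / 2)) → Finset (Fin N) := fun w =>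
    Finset.univ.filter (fun u : Fin N => Odd (u : ℕ) ∧ H (σ u) = w) with ha
  set b : Fin (3 * (N / 2)) → Finset (Fin N) := fun w =>
    Finset.univ.filter (fun u : Fin N => Even (u : ℕ) ∧ H (σ u) = w) with hb
  have hfib : ∀ w, (a w).card + (b w).card
      = (Finset.univ.filter (fun u : Fin N => H (σ u) = w)).card := by
    intro w
    rw [← Finset.card_union_of_disjoint]
    · congr 1
      ext u
      simp only [ha, hb, Finset.mem_union, Finset.mem_filter, Finset.mem_univ, true_and]
      have := Nat.even_or_odd (u : ℕ)
      tauto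
    · rw [Finset.disjoint_left]
      intro u hu hv
      simp only [ha, hb, Finset.mem_filter, Finset.mem_univ, true_and] at hu hv
      exact (Nat.not_even_iff_odd.mpr hu.1) hv.1
  have hfib2 : ∀ w, (Finset.univ.filter (fun u : Fin N => H (σ u) = w)).card
      = (Finset.univ.filter (fun u : Fin N => H u = w)).card := by
    intro w
    refine Finset.card_bij (fun u _ => σ u) ?_ ?_ ?_
    · intro u hu
      simpa using hu
    · intro u _ v _ h
      exact σ.injective h
    · intro v hv
      exact ⟨σ.symm v, by simpa using hv, by simp⟩
  have h02 : ∀ w, (a w).card + (b w).card = 0 ∨ (a w).card + (b w).card = 2 := by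
    intro w
    rw [hfib, hfib2]
    by_cases h : ∃ u, H u = w
    · exact Or.inr (hH w h)
    · left
      rw [Finset.card_eq_zero, Finset.filter_eq_empty_iff]
      intro u _ hu
      exact h ⟨u, hu⟩
  have habs : ∀ w, |p w - q w| = (2 / (N : ℝ)) *
      (((a w).card + (b w).card : ℕ) - 2 * (((a w).card * (b w).card : ℕ) : ℝ)) := by
    intro w
    rw [hp, hq, ← mul_sub, abs_mul, abs_of_nonneg (by positivity : (0 : ℝ) ≤ 2 / (N : ℝ))]
    congr 1
    change |((a w).card : ℝ) - ((b w).card : ℝ)| = _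
    have h := h02 w
    generalize (a w).card = x at h
    generalize (b w).card = y at h
    have hx : x ≤ 2 := by omega
    have hy : y ≤ 2 := by omega
    interval_cases x <;> interval_cases y <;> first | omega | norm_num
  have hsum : ∑ w, ((a w).card + (b w).card) = N := by
    simp_rw [hfib]
    rw [← Finset.card_eq_sum_card_fiberwise (f := fun u : Fin N => H (σ u))
      (s := Finset.univ) (t := Finset.univ) (by intro u _; simp)]
    simp
  have hpairs : ∑ w, (a w).card * (b w).card =
      (Finset.univ.filter (fun uv : Fin N × Fin N =>
        Odd (uv.1 : ℕ) ∧ Even (uv.2 : ℕ) ∧ H (σ uv.1) = H (σ uv.2))).card := by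
    rw [Finset.card_eq_sum_card_fiberwise (f := fun uv : Fin N × Fin N => H (σ uv.1))
      (t := Finset.univ) (by intro u _; simp)]
    refine Finset.sum_congr rfl fun w _ => ?_
    rw [← Finset.card_product]
    congr 1
    ext ⟨u, v⟩
    simp only [ha, hb, Finset.mem_product, Finset.mem_filter, Finset.mem_univ, true_and]
    constructor
    · rintro ⟨⟨h1, h2⟩, h3, h4⟩
      exact ⟨⟨h1, h3, h2.trans h4.symm⟩, h2⟩
    · rintro ⟨⟨h1, h3, h5⟩, h2⟩
      exact ⟨⟨h1, h2⟩, h3, h5.symm.trans h2⟩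
  have hbij : (Finset.univ.filter (fun uv : Fin N × Fin N =>
        Odd (uv.1 : ℕ) ∧ Even (uv.2 : ℕ) ∧ H (σ uv.1) = H (σ uv.2))).card =
      (Finset.univ.filter (fun uv : Fin N × Fin N =>
        (uv.1 : ℕ) < (uv.2 : ℕ) ∧ H (σ uv.1) = H (σ uv.2) ∧
          ¬ (Odd (uv.1 : ℕ) ↔ Odd (uv.2 : ℕ)))).card := by
    refine Finset.card_bij'
      (fun uv _ => if (uv.1 : ℕ) < (uv.2 : ℕ) then uv else (uv.2, uv.1))
      (fun uv _ => if Odd (uv.1 : ℕ) then uv else (uv.2, uv.1)) ?_ ?_ ?_ ?_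
    · rintro ⟨u, v⟩ h
      simp only [Finset.mem_filter, Finset.mem_univ, true_and] at h ⊢
      obtain ⟨h1, h2, h3⟩ := h
      have h2' := Nat.not_odd_iff_even.mpr h2
      split_ifs with hlt
      · exact ⟨hlt, h3, by tauto⟩
      · refine ⟨lt_of_le_of_ne (not_lt.mp hlt) ?_, h3.symm, by tauto⟩
        intro he
        dsimp only at he
        rw [he] at h2'
        exact h2' h1
    · rintro ⟨u, v⟩ h
      simp only [Finset.mem_filter, Finset.mem_univ, true_and] at h ⊢
      obtain ⟨h1, h2, h3⟩ := h
      split_ifs with ho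
      · exact ⟨ho, Nat.not_odd_iff_even.mp (by tauto), h2⟩
      · exact ⟨by dsimp only; tauto, Nat.not_odd_iff_even.mp ho, h2.symm⟩
    · rintro ⟨u, v⟩ h
      simp only [Finset.mem_filter, Finset.mem_univ, true_and] at h
      obtain ⟨h1, h2, h3⟩ := h
      have h2' := Nat.not_odd_iff_even.mpr h2
      by_cases hlt : (u : ℕ) < v <;> simp [hlt, h1, h2']
    · rintro ⟨u, v⟩ h
      simp only [Finset.mem_filter, Finset.mem_univ, true_and] at h
      obtain ⟨h1, h2, h3⟩ := h
      by_cases ho : Odd (u : ℕ)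
      · simp only [ho, h1, if_true]
      · simp only [ho, if_false, not_lt.mpr h1.le]
  rw [← hbij, ← hpairs]
  simp_rw [habs]
  rw [← Finset.mul_sum, Finset.sum_sub_distrib, ← Finset.mul_sum, ← Nat.cast_sum,
    ← Nat.cast_sum, hsum]
  field_simp
  ring
end

section
/- There exists N₀ such that for every even integer N ≥ N₀ the following holds: for every perfect matching ℳ of Fin N (a partition of Fin N into N/2 unordered pairs) and a uniformly random permutation σ of Fin N, the random variable X = #{ {u,v} ∈ ℳ : σ(u) and σ(v) have different parity } satisfies Prob[ X < N/16 ] ≤ 1/2. -/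
open scoped Classical

lemma rmpb_four {N : ℕ} (s : Fin N → ℝ) (hs : ∀ i, s i = 1 ∨ s i = -1) (h0 : ∑ i, s i = 0)
    (a b c d : Fin N) (had : a ≠ d) (hbd : b ≠ d) (hcd : c ≠ d) (hN : 3 < N) :
    ((N : ℝ) - 3) * ∑ σ : Equiv.Perm (Fin N), s (σ a) * s (σ b) * (s (σ c) * s (σ d))
      ≤ 3 * (Fintype.card (Equiv.Perm (Fin N)) : ℝ) := by
  set T : Fin N → ℝ := fun w => ∑ σ : Equiv.Perm (Fin N), s (σ a) * s (σ b) * (s (σ c) * s (σ w))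
    with hT
  set K : ℝ := (Fintype.card (Equiv.Perm (Fin N)) : ℝ) with hK
  have hsum : ∑ w, T w = 0 := by
    simp only [hT]
    rw [Finset.sum_comm]
    apply Finset.sum_eq_zero
    intro σ _
    rw [← Finset.mul_sum, ← Finset.mul_sum, Equiv.sum_comp σ s, h0]
    simp
  have habs : ∀ w, -K ≤ T w := by
    intro w
    have : ∑ σ : Equiv.Perm (Fin N), (-1 : ℝ) ≤ T w := by
      apply Finset.sum_le_sum
      intro σ _
      rcases hs (σ a) with h1 | h1 <;> rcases hs (σ b) with h2 | h2 <;>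
        rcases hs (σ c) with h3 | h3 <;> rcases hs (σ w) with h4 | h4 <;>
        rw [h1, h2, h3, h4] <;> norm_num
    simpa [hK] using this
  have heq : ∀ w, w ∉ ({a, b, c} : Finset (Fin N)) → T w = T d := by
    intro w hw
    simp only [Finset.mem_insert, Finset.mem_singleton, not_or] at hw
    obtain ⟨h1, h2, h3⟩ := hw
    simp only [hT]
    rw [← Equiv.sum_comp (Equiv.mulRight (Equiv.swap w d))]
    apply Finset.sum_congr rfl
    intro σ _
    simp [Equiv.swap_apply_of_ne_of_ne (Ne.symm h1) had,
      Equiv.swap_apply_of_ne_of_ne (Ne.symm h2) hbd, Equiv.swap_apply_of_ne_of_ne (Ne.symm h3) hcd]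
  have hcard : (({a, b, c} : Finset (Fin N)).card : ℝ) ≤ 3 := by
    exact_mod_cast Finset.card_le_three
  have hK0 : 0 ≤ K := by positivity
  set C : Finset (Fin N) := {a, b, c} with hC
  have hsplit := Finset.sum_add_sum_compl C T
  have hcomp : ∑ w ∈ Cᶜ, T w = ∑ w ∈ Cᶜ, T d :=
    Finset.sum_congr rfl (fun w hw => heq w (Finset.mem_compl.mp hw))
  rw [hsum, hcomp] at hsplit
  have h1 : -((C.card : ℝ) * K) ≤ ∑ w ∈ C, T w := by
    have := Finset.card_nsmul_le_sum C T (-K) (fun w _ => habs w)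
    simpa using this
  rw [Finset.sum_const, Finset.card_compl, Fintype.card_fin, nsmul_eq_mul,
    Nat.cast_sub (by simpa using Finset.card_le_univ C)] at hsplit
  change ((N : ℝ) - 3) * T d ≤ 3 * K
  have hN' : (3 : ℝ) < N := by exact_mod_cast hN
  rcases le_or_gt (T d) 0 with h | h
  · nlinarith
  · nlinarith

theorem random_matching_parity_bound :
    ∃ N₀ : ℕ, ∀ N : ℕ, N₀ ≤ N → N % 2 = 0 →
      ∀ m : Equiv.Perm (Fin N), (∀ u, m (m u) = u) → (∀ u, m u ≠ u) →
      ((Finset.univ.filter (fun σ : Equiv.Perm (Fin N) =>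
          (((Finset.univ.filter (fun uv : Fin N × Fin N =>
              (uv.1 : ℕ) < (uv.2 : ℕ) ∧ m uv.1 = uv.2 ∧
                ¬ (Odd ((σ uv.1 : Fin N) : ℕ) ↔ Odd ((σ uv.2 : Fin N) : ℕ)))).card : ℝ)
            < (N : ℝ) / 16))).card : ℝ)
        / (Fintype.card (Equiv.Perm (Fin N)) : ℝ) ≤ 1 / 2 := by
  refine ⟨100, fun N hN hpar m hinv hfix => ?_⟩
  set s : Fin N → ℝ := fun i => (-1) ^ (i : ℕ) with hsdef
  have hs : ∀ i, s i = 1 ∨ s i = -1 := fun i => neg_one_pow_eq_or ℝ _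
  have h0 : ∑ i, s i = 0 := by
    rw [Fin.sum_univ_eq_sum_range (fun i => (-1 : ℝ) ^ i), neg_one_geom_sum,
      if_pos (Nat.even_iff.mpr hpar)]
  have hNR : (100 : ℝ) ≤ N := by exact_mod_cast hN
  set K : ℝ := (Fintype.card (Equiv.Perm (Fin N)) : ℝ) with hK
  have hKpos : 0 < K := by rw [hK]; exact_mod_cast Fintype.card_pos
  set Z : Equiv.Perm (Fin N) → ℝ := fun σ => ∑ u, s (σ u) * s (σ (m u)) with hZ
  set B := (Finset.univ.filter (fun σ : Equiv.Perm (Fin N) =>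
          (((Finset.univ.filter (fun uv : Fin N × Fin N =>
              (uv.1 : ℕ) < (uv.2 : ℕ) ∧ m uv.1 = uv.2 ∧
                ¬ (Odd ((σ uv.1 : Fin N) : ℕ) ↔ Odd ((σ uv.2 : Fin N) : ℕ)))).card : ℝ)
            < (N : ℝ) / 16))) with hB
  -- second moment
  have hZ2 : ∑ σ, Z σ ^ 2 ≤ 6 * N * K := by
    have e1 : ∑ σ, Z σ ^ 2 = ∑ u, ∑ w, ∑ σ : Equiv.Perm (Fin N),
        s (σ u) * s (σ (m u)) * (s (σ w) * s (σ (m w))) := by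
      simp only [hZ, sq, Finset.sum_mul_sum]
      rw [Finset.sum_comm]
      refine Finset.sum_congr rfl fun u _ => ?_
      rw [Finset.sum_comm]
    rw [e1]
    have e2 : ∀ u w, ∑ σ : Equiv.Perm (Fin N), s (σ u) * s (σ (m u)) * (s (σ w) * s (σ (m w)))
        ≤ 3 * K / (N - 3) + (if w = u then K else 0) + (if w = m u then K else 0) := by
      intro u w
      have hq : 0 ≤ 3 * K / ((N : ℝ) - 3) := by
        apply div_nonneg <;> linarith
      have triv : ∑ σ : Equiv.Perm (Fin N), s (σ u) * s (σ (m u)) * (s (σ w) * s (σ (m w))) ≤ K := by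
        have : ∑ σ : Equiv.Perm (Fin N), s (σ u) * s (σ (m u)) * (s (σ w) * s (σ (m w)))
            ≤ ∑ σ : Equiv.Perm (Fin N), (1 : ℝ) := by
          apply Finset.sum_le_sum
          intro σ _
          rcases hs (σ u) with h1 | h1 <;> rcases hs (σ (m u)) with h2 | h2 <;>
            rcases hs (σ w) with h3 | h3 <;> rcases hs (σ (m w)) with h4 | h4 <;>
            rw [h1, h2, h3, h4] <;> norm_num
        simpa [hK] using this
      by_cases h1 : w = u
      · rw [if_pos h1]; split_ifs <;> linarith
      by_cases h2 : w = m u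
      · rw [if_pos h2]; split_ifs; linarith
      rw [if_neg h1, if_neg h2, add_zero, add_zero, le_div_iff₀ (by linarith), mul_comm]
      refine rmpb_four s hs h0 u (m u) w (m w) ?_ ?_ (hfix w).symm (by omega)
      · intro h; apply h2; rw [h, hinv]
      · intro h; exact h1 (m.injective h).symm
    calc _ ≤ ∑ u : Fin N, ∑ w : Fin N,
          (3 * K / (N - 3) + (if w = u then K else 0) + (if w = m u then K else 0)) :=
          Finset.sum_le_sum fun u _ => Finset.sum_le_sum fun w _ => e2 u w
      _ = N * (N * (3 * K / (N - 3)) + K + K) := by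
          simp [Finset.sum_add_distrib]
          try ring
      _ ≤ 6 * N * K := by
          have : N * (3 * K / ((N : ℝ) - 3)) ≤ 4 * K := by
            rw [← mul_div_assoc, div_le_iff₀ (by linarith)]
            nlinarith
          nlinarith
  have hbad : ∀ σ ∈ B, (9 / 16 : ℝ) * N ^ 2 ≤ Z σ ^ 2 := by
    intro σ hσ
    have hσ' := (Finset.mem_filter.mp hσ).2
    set P := (Finset.univ.filter (fun uv : Fin N × Fin N =>
              (uv.1 : ℕ) < (uv.2 : ℕ) ∧ m uv.1 = uv.2 ∧
                ¬ (Odd ((σ uv.1 : Fin N) : ℕ) ↔ Odd ((σ uv.2 : Fin N) : ℕ)))) with hP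
    set D := Finset.univ.filter (fun u : Fin N =>
      ¬ (Odd ((σ u : Fin N) : ℕ) ↔ Odd ((σ (m u) : Fin N) : ℕ))) with hD
    have hDP : D ⊆ P.image Prod.fst ∪ P.image Prod.snd := by
      intro u hu
      have hu' := (Finset.mem_filter.mp hu).2
      rw [Finset.mem_union, Finset.mem_image, Finset.mem_image]
      rcases lt_trichotomy (u : ℕ) (m u : ℕ) with h | h | h
      · exact Or.inl ⟨(u, m u), by
          rw [hP, Finset.mem_filter]
          exact ⟨Finset.mem_univ _, h, rfl, hu'⟩, rfl⟩
      · exact absurd (Fin.ext h).symm (hfix u)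
      · exact Or.inr ⟨(m u, u), by
          simp only [hP, Finset.mem_filter]
          exact ⟨Finset.mem_univ _, h, hinv u, fun h' => hu' h'.symm⟩, rfl⟩
    have hDc : D.card ≤ 2 * P.card := by
      calc D.card ≤ _ := Finset.card_le_card hDP
        _ ≤ _ := Finset.card_union_le _ _
        _ ≤ P.card + P.card := add_le_add Finset.card_image_le Finset.card_image_le
        _ = _ := by ring
    have hDR : (D.card : ℝ) ≤ 2 * P.card := by exact_mod_cast hDc
    have hZD : Z σ = N - 2 * D.card := by
      have : ∀ u, s (σ u) * s (σ (m u)) = 1 - 2 * (if ¬ (Odd ((σ u : Fin N) : ℕ) ↔ Odd ((σ (m u) : Fin N) : ℕ)) then (1:ℝ) else 0) := by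
        intro u
        simp only [hsdef]
        rcases Nat.even_or_odd ((σ u : Fin N) : ℕ) with h | h <;>
          rcases Nat.even_or_odd ((σ (m u) : Fin N) : ℕ) with h' | h' <;>
          simp [h.neg_one_pow, h'.neg_one_pow, h, h', Nat.not_odd_iff_even.mpr, ← Nat.not_even_iff_odd] <;>
          first | done | norm_num | skip
        all_goals (simp_all [← Nat.not_even_iff_odd]; try norm_num)
      simp only [hZ]
      rw [Finset.sum_congr rfl fun u _ => this u, Finset.sum_sub_distrib, ← Finset.mul_sum,
        Finset.sum_boole]
      simp [hD]
    have : (3 / 4 : ℝ) * N ≤ Z σ := by rw [hZD]; linarith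
    nlinarith
  have hcount : (B.card : ℝ) * ((9 / 16 : ℝ) * N ^ 2) ≤ 6 * N * K := by
    calc (B.card : ℝ) * ((9 / 16 : ℝ) * N ^ 2) ≤ ∑ σ ∈ B, Z σ ^ 2 := by
          simpa using Finset.card_nsmul_le_sum B (fun σ => Z σ ^ 2) _ hbad
      _ ≤ ∑ σ, Z σ ^ 2 := Finset.sum_le_sum_of_subset_of_nonneg (Finset.subset_univ _)
          (fun _ _ _ => sq_nonneg _)
      _ ≤ _ := hZ2
  rw [div_le_iff₀ hKpos]
  have hNpos : (0 : ℝ) < N := by linarith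
  have h3 : (B.card : ℝ) * ((9 / 16 : ℝ) * N) ≤ 6 * K := by
    refine le_of_mul_le_mul_right ?_ hNpos
    nlinarith
  have hBn : (0 : ℝ) ≤ B.card := by positivity
  nlinarith
end

section
/- There exists N₀ such that for every even integer N ≥ N₀ and every two-to-one function H : Fin N → Fin (3N/2) the following holds. For a uniformly random permutation σ of Fin N, define probability distributions p, q on Fin (3N/2) by p w = (2/N)·|{u ∈ Fin N : u is odd and H(σ u) = w}| and q w = (2/N)·|{u ∈ Fin N : u is even and H(σ u) = w}|. Then Prob[ ‖p − q‖₁ ≤ 7/4 ] ≥ 1/2. -/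
open scoped Classical

/-- Sign of a label. -/
noncomputable def sgnLabel {N : ℕ} (u : Fin N) : ℝ := (-1) ^ (u : ℕ)

lemma sgnLabel_cases {N : ℕ} (u : Fin N) : sgnLabel u = 1 ∨ sgnLabel u = -1 :=
  neg_one_pow_eq_or ℝ _

lemma sgnLabel_sum {N : ℕ} (hN : N % 2 = 0) : ∑ u : Fin N, sgnLabel u = 0 := by
  unfold sgnLabel
  rw [Fin.sum_univ_eq_sum_range (fun i => (-1 : ℝ) ^ i), neg_one_geom_sum]
  rw [if_pos (Nat.even_iff.mpr hN)]

/-- Fourth moment (unnormalised). -/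
noncomputable def fourthMoment {N : ℕ} (a b c d : Fin N) : ℝ :=
  ∑ σ : Equiv.Perm (Fin N), sgnLabel (σ⁻¹ a) * sgnLabel (σ⁻¹ b) * sgnLabel (σ⁻¹ c) * sgnLabel (σ⁻¹ d)

lemma fourthMoment_abs {N : ℕ} (a b c d : Fin N) :
    |fourthMoment a b c d| ≤ Fintype.card (Equiv.Perm (Fin N)) := by
  unfold fourthMoment
  refine (Finset.abs_sum_le_sum_abs _ _).trans ?_
  have : ∀ u : Fin N, |sgnLabel u| = 1 := fun u => by
    rcases sgnLabel_cases u with h | h <;> simp [h]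
  simp only [abs_mul, this]
  simp

lemma fourthMoment_swap {N : ℕ} (a b c d d' : Fin N) (h1 : d ≠ a) (h2 : d ≠ b) (h3 : d ≠ c)
    (h1' : d' ≠ a) (h2' : d' ≠ b) (h3' : d' ≠ c) :
    fourthMoment a b c d' = fourthMoment a b c d := by
  unfold fourthMoment
  rw [← Equiv.sum_comp (Equiv.mulLeft (Equiv.swap d d'))]
  refine Finset.sum_congr rfl fun σ _ => ?_
  simp only [Equiv.coe_mulLeft, mul_inv_rev, Equiv.swap_inv, Equiv.Perm.mul_apply]
  rw [Equiv.swap_apply_of_ne_of_ne h1.symm h1'.symm, Equiv.swap_apply_of_ne_of_ne h2.symm h2'.symm,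
    Equiv.swap_apply_of_ne_of_ne h3.symm h3'.symm, Equiv.swap_apply_right]

lemma fourthMoment_sum {N : ℕ} (hN : N % 2 = 0) (a b c : Fin N) :
    ∑ d, fourthMoment a b c d = 0 := by
  unfold fourthMoment
  rw [Finset.sum_comm]
  refine Finset.sum_eq_zero fun σ _ => ?_
  rw [← Finset.mul_sum, Equiv.sum_comp σ⁻¹ sgnLabel, sgnLabel_sum hN, mul_zero]

lemma fourthMoment_le {N : ℕ} (hN : N % 2 = 0) (h3N : 3 < N) (a b c d : Fin N)
    (h1 : d ≠ a) (h2 : d ≠ b) (h3 : d ≠ c) :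
    fourthMoment a b c d ≤ 3 / ((N : ℝ) - 3) * Fintype.card (Equiv.Perm (Fin N)) := by
  set K : ℝ := (Fintype.card (Equiv.Perm (Fin N)) : ℝ) with hK
  have hK0 : 0 ≤ K := Nat.cast_nonneg _
  set S : Finset (Fin N) := {a, b, c} with hS
  have hc : S.card ≤ 3 := Finset.card_le_three
  have hcR : (S.card : ℝ) ≤ 3 := by exact_mod_cast hc
  have hNR : (3 : ℝ) < N := by exact_mod_cast h3N
  have hsum := fourthMoment_sum hN a b c
  rw [← Finset.sum_add_sum_compl S] at hsum
  have e : ∑ x ∈ Sᶜ, fourthMoment a b c x = ((N : ℝ) - S.card) * fourthMoment a b c d := by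
    rw [Finset.sum_congr rfl (g := fun _ => fourthMoment a b c d)]
    · rw [Finset.sum_const, Finset.card_compl, nsmul_eq_mul, Fintype.card_fin, Nat.cast_sub]
      omega
    · intro x hx
      simp only [hS, Finset.mem_compl, Finset.mem_insert, Finset.mem_singleton, not_or] at hx
      exact fourthMoment_swap a b c d x h1 h2 h3 hx.1 hx.2.1 hx.2.2
  have l : -(3 * K) ≤ ∑ x ∈ S, fourthMoment a b c x := by
    have : ∑ x ∈ S, (-K) ≤ ∑ x ∈ S, fourthMoment a b c x :=
      Finset.sum_le_sum fun x _ => (abs_le.mp (fourthMoment_abs a b c x)).1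
    rw [Finset.sum_const, nsmul_eq_mul] at this
    nlinarith
  rw [e] at hsum
  rw [div_mul_eq_mul_div, le_div_iff₀ (by linarith)]
  rcases le_or_gt (fourthMoment a b c d) 0 with h | h
  · nlinarith
  · nlinarith

lemma count_diff {N M : ℕ} (H : Fin N → Fin M) (σ : Equiv.Perm (Fin N)) (w : Fin M) :
    ((Finset.univ.filter (fun u : Fin N => Odd (u : ℕ) ∧ H (σ u) = w)).card : ℝ) -
      ((Finset.univ.filter (fun u : Fin N => Even (u : ℕ) ∧ H (σ u) = w)).card : ℝ)
      = - ∑ v ∈ Finset.univ.filter (fun v => H v = w), sgnLabel (σ⁻¹ v) := by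
  rw [Finset.sum_filter, ← Equiv.sum_comp σ, Finset.card_filter, Finset.card_filter]
  push_cast
  rw [← Finset.sum_sub_distrib, ← Finset.sum_neg_distrib]
  refine Finset.sum_congr rfl fun u _ => ?_
  rw [show σ⁻¹ (σ u) = u from σ.symm_apply_apply u]
  unfold sgnLabel
  rcases Nat.even_or_odd (u : ℕ) with h | h
  · have h' : ¬ Odd (u : ℕ) := by simpa using h
    by_cases hw : H (σ u) = w <;> simp [h, h', hw]
  · have h' : ¬ Even (u : ℕ) := by simpa using h
    by_cases hw : H (σ u) = w <;> simp [h, h', hw]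

lemma l1_eq {N M : ℕ} (hN : 0 < N) (H : Fin N → Fin M) (π : Fin N → Fin N)
    (hne : ∀ v, π v ≠ v)
    (hf : ∀ v, Finset.univ.filter (fun x => H x = H v) = {v, π v}) (σ : Equiv.Perm (Fin N)) :
    ∑ w : Fin M, |(2 / (N : ℝ)) *
        ((Finset.univ.filter (fun u : Fin N => Odd (u : ℕ) ∧ H (σ u) = w)).card : ℝ) -
      (2 / (N : ℝ)) *
        ((Finset.univ.filter (fun u : Fin N => Even (u : ℕ) ∧ H (σ u) = w)).card : ℝ)|
    = 1 + (∑ v, sgnLabel (σ⁻¹ v) * sgnLabel (σ⁻¹ (π v))) / N := by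
  have hNR : (0 : ℝ) < N := by exact_mod_cast hN
  have key : ∀ w, |(2 / (N : ℝ)) *
        ((Finset.univ.filter (fun u : Fin N => Odd (u : ℕ) ∧ H (σ u) = w)).card : ℝ) -
      (2 / (N : ℝ)) *
        ((Finset.univ.filter (fun u : Fin N => Even (u : ℕ) ∧ H (σ u) = w)).card : ℝ)|
      = ∑ v ∈ Finset.univ.filter (fun v => H v = w),
          (1 / N) * (1 + sgnLabel (σ⁻¹ v) * sgnLabel (σ⁻¹ (π v))) := by
    intro w
    rw [← mul_sub, count_diff, abs_mul, abs_neg, abs_of_pos (by positivity : (0 : ℝ) < 2 / N)]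
    by_cases hw : ∃ v, H v = w
    · obtain ⟨v, rfl⟩ := hw
      have hπ : H (π v) = H v := by
        have : π v ∈ Finset.univ.filter (fun x => H x = H v) := by rw [hf]; simp
        simpa using this
      have hππ : π (π v) = v := by
        have : v ∈ ({π v, π (π v)} : Finset (Fin N)) := by rw [← hf]; simp [hπ]
        simp only [Finset.mem_insert, Finset.mem_singleton] at this
        rcases this with h | h
        · exact absurd h.symm (hne v)
        · exact h.symm
      rw [hf, Finset.sum_pair (hne v).symm, Finset.sum_pair (hne v).symm, hππ]
      rcases sgnLabel_cases (σ⁻¹ v) with h | h <;> rcases sgnLabel_cases (σ⁻¹ (π v)) with h' | h' <;>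
        rw [h, h'] <;> norm_num <;> ring
    · have : Finset.univ.filter (fun v => H v = w) = ∅ := by
        ext x; simp; exact fun h => hw ⟨x, h⟩
      rw [this]; simp
  rw [Finset.sum_congr rfl fun w _ => key w, Finset.sum_fiberwise, ← Finset.mul_sum,
    Finset.sum_add_distrib]
  simp
  field_simp

lemma second_moment {N M : ℕ} (hN : N % 2 = 0) (h3N : 3 < N) (H : Fin N → Fin M)
    (π : Fin N → Fin N) (hne : ∀ v, π v ≠ v)
    (hf : ∀ v, Finset.univ.filter (fun x => H x = H v) = {v, π v}) :
    ∑ σ : Equiv.Perm (Fin N), (∑ v, sgnLabel (σ⁻¹ v) * sgnLabel (σ⁻¹ (π v))) ^ 2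
      ≤ (2 * N + N * N * (3 / ((N : ℝ) - 3))) * Fintype.card (Equiv.Perm (Fin N)) := by
  set K : ℝ := (Fintype.card (Equiv.Perm (Fin N)) : ℝ) with hK
  have hK0 : 0 ≤ K := Nat.cast_nonneg _
  have hNR : (3 : ℝ) < N := by exact_mod_cast h3N
  have hq : 0 ≤ 3 / ((N : ℝ) - 3) := div_nonneg (by norm_num) (by linarith)
  have e : ∑ σ : Equiv.Perm (Fin N), (∑ v, sgnLabel (σ⁻¹ v) * sgnLabel (σ⁻¹ (π v))) ^ 2
      = ∑ v, ∑ v', fourthMoment v (π v) v' (π v') := by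
    unfold fourthMoment
    simp_rw [sq, Finset.sum_mul_sum]
    rw [Finset.sum_comm]
    refine Finset.sum_congr rfl fun v _ => ?_
    rw [Finset.sum_comm]
    refine Finset.sum_congr rfl fun v' _ => Finset.sum_congr rfl fun σ _ => ?_
    ring
  rw [e]
  have b : ∀ v, ∑ v', fourthMoment v (π v) v' (π v') ≤ 2 * K + N * (3 / ((N : ℝ) - 3) * K) := by
    intro v
    have hb : ∀ v', fourthMoment v (π v) v' (π v') ≤
        (if H v' = H v then K else 0) + 3 / ((N : ℝ) - 3) * K := by
      intro v'
      split_ifs with h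
      · have := (abs_le.mp (fourthMoment_abs v (π v) v' (π v'))).2
        have : 0 ≤ 3 / ((N : ℝ) - 3) * K := mul_nonneg hq hK0
        linarith
      · have hπ : ∀ x, H (π x) = H x := by
          intro x
          have : π x ∈ Finset.univ.filter (fun y => H y = H x) := by rw [hf]; simp
          simpa using this
        rw [zero_add]
        apply fourthMoment_le hN h3N
        · intro hh; apply h; rw [← hπ v', hh]
        · intro hh; apply h; rw [← hπ v', hh, hπ]
        · exact hne v'
    refine (Finset.sum_le_sum fun v' _ => hb v').trans ?_
    rw [Finset.sum_add_distrib, ← Finset.sum_filter, hf, Finset.sum_pair (hne v).symm]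
    simp
    linarith
  refine (Finset.sum_le_sum fun v _ => b v).trans ?_
  rw [Finset.sum_const, Finset.card_univ, Fintype.card_fin, nsmul_eq_mul]
  apply le_of_eq
  ring

/-- Reduction from the Collision Problem to testing Orthogonality: for any
two-to-one function `H : Fin N → Fin (3N/2)` with `N` even and large enough,
and a uniformly random permutation `σ` of `Fin N`, the distributions `p` and
`q` obtained by pushing the uniform distributions on odd resp. even labels
through `H ∘ σ` satisfy `‖p − q‖₁ ≤ 7/4` with probability at least `1/2`. -/
theorem two_to_one_distance_bound :
    ∃ N₀ : ℕ, ∀ N : ℕ, N₀ ≤ N → N % 2 = 0 →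
      ∀ H : Fin N → Fin (3 * (N / 2)),
      (∀ w, (∃ u, H u = w) → (Finset.univ.filter (fun u => H u = w)).card = 2) →
      ((Finset.univ.filter (fun σ : Equiv.Perm (Fin N) =>
          ∑ w : Fin (3 * (N / 2)),
            |(2 / (N : ℝ)) *
                ((Finset.univ.filter (fun u : Fin N =>
                  Odd (u : ℕ) ∧ H (σ u) = w)).card : ℝ) -
              (2 / (N : ℝ)) *
                ((Finset.univ.filter (fun u : Fin N =>
                  Even (u : ℕ) ∧ H (σ u) = w)).card : ℝ)| ≤ 7 / 4)).card : ℝ)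
        / (Fintype.card (Equiv.Perm (Fin N)) : ℝ) ≥ 1 / 2 := by
  refine ⟨100, fun N hN hpar H hH => ?_⟩
  have hex : ∀ v : Fin N, ∃ p, p ≠ v ∧ Finset.univ.filter (fun x => H x = H v) = {v, p} := by
    intro v
    obtain ⟨x, y, hxy, hs⟩ := Finset.card_eq_two.mp (hH (H v) ⟨v, rfl⟩)
    have hv : v ∈ ({x, y} : Finset (Fin N)) := by rw [← hs]; simp
    simp only [Finset.mem_insert, Finset.mem_singleton] at hv
    rcases hv with rfl | rfl
    · exact ⟨y, hxy.symm, hs⟩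
    · exact ⟨x, hxy, by rw [hs, Finset.pair_comm]⟩
  choose π hne hf using hex
  have hNR : (100 : ℝ) ≤ N := by exact_mod_cast hN
  have hsm := second_moment hpar (by omega) H π hne hf
  simp only [l1_eq (by omega : 0 < N) H π hne hf]
  set K : ℝ := (Fintype.card (Equiv.Perm (Fin N)) : ℝ) with hK
  have hK0 : 0 < K := by rw [hK]; exact_mod_cast Fintype.card_pos
  set R : Equiv.Perm (Fin N) → ℝ := fun σ => ∑ v, sgnLabel (σ⁻¹ v) * sgnLabel (σ⁻¹ (π v)) with hR
  change ((Finset.univ.filter (fun σ => 1 + R σ / N ≤ 7 / 4)).card : ℝ) / K ≥ 1 / 2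
  change ∑ σ, R σ ^ 2 ≤ _ at hsm
  have hsplit : ((Finset.univ.filter (fun σ => 1 + R σ / N ≤ 7 / 4)).card : ℝ) +
      ((Finset.univ.filter (fun σ => ¬ (1 + R σ / N ≤ 7 / 4))).card : ℝ) = K := by
    rw [hK]
    exact_mod_cast Finset.card_filter_add_card_filter_not (s := Finset.univ) _
  have hbad : ((Finset.univ.filter (fun σ => ¬ (1 + R σ / N ≤ 7 / 4))).card : ℝ) *
      (9 / 16 * (N : ℝ) ^ 2) ≤ ∑ σ, R σ ^ 2 := by
    rw [← nsmul_eq_mul, ← Finset.sum_const]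
    refine (Finset.sum_le_sum fun σ hσ => ?_).trans
      (Finset.sum_le_sum_of_subset_of_nonneg (Finset.filter_subset _ _)
        fun σ _ _ => sq_nonneg (R σ))
    simp only [Finset.mem_filter, not_le] at hσ
    have h1 : 3 / 4 < R σ / N := by linarith [hσ.2]
    rw [lt_div_iff₀ (by linarith)] at h1
    nlinarith
  have hc : 2 * (N : ℝ) + N * N * (3 / ((N : ℝ) - 3)) ≤ 9 / 32 * (N : ℝ) ^ 2 := by
    have : 3 / ((N : ℝ) - 3) ≤ 3 / 97 := by
      apply div_le_div_of_nonneg_left <;> linarith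
    nlinarith [mul_le_mul_of_nonneg_left this (by positivity : (0 : ℝ) ≤ N * N)]
  have hfin := (hbad.trans hsm).trans (mul_le_mul_of_nonneg_right hc hK0.le)
  have hN2 : (0 : ℝ) < 9 / 16 * (N : ℝ) ^ 2 := by positivity
  have hB : ((Finset.univ.filter (fun σ => ¬ (1 + R σ / N ≤ 7 / 4))).card : ℝ) ≤ K / 2 := by
    refine le_of_mul_le_mul_right (hfin.trans (le_of_eq ?_)) hN2
    ring
  rw [ge_iff_le, le_div_iff₀ hK0]
  linarith
end
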